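/- Let p : X̃ → X be a harmonic Galois cover of finite connected graphs with abelian Galois group G of order N. Then the number of spanning trees of X̃ satisfies |Jac(X̃)| = (1/N) · ∏_{v ∈ V(X)} |D(v)|^{N/|D(v)|} · |Jac(X)| · ∏_{ρ ∈ Ĝ'} w(M*(X̃/X, ρ)), where Ĝ' is the set of nontrivial characters ρ : G → ℂ*, D(v) is the dilation subgroup at v, |Jac(X)| is the number of spanning trees of X, and w(M*(X̃/X, ρ)) is the weight of the ρ-twisted matroid of the cover. -/

import Mathlib

/-!
The proof evaluates one determinant in two ways. Let `L̃` be the Laplacian of `X̃` and `d` the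
vector of local degrees, whose entries sum to `N |V(X)|`.

On the one hand, by Kirchhoff's theorem, adding the rank-one matrix `d dᵀ` to `L̃` gives a matrix
of determinant `(N |V(X)|)² |Jac(X̃)|` (`pdet_subLap_add_rankOne`).

On the other hand, the functions on `V(X̃)` have a basis indexed by the pairs `(ρ, v)` of a
character `ρ` of `G` and a vertex `v` of `X` with `ρ` trivial on `D(v)`: the function is supported
on the fibre of `v`, where it is `ρ` (`isotypic`). Orthogonality of characters provides the inverse
change of basis (`pmat_mul_qmat`, `qmat_mul_pmat`). In this basis `L̃ + d dᵀ` is block diagonal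
(`laplacian_mul_pmat`). The block of `ρ` is the principal submatrix of the `ρ`-twisted Laplacian
of `X` on the vertices where `ρ` is trivial on the dilation group, with the row of `v` scaled by
`|D(v)|`; for `ρ = 1` the constant `N` is added to every entry before scaling.

* For `ρ ≠ 1` the principal minor of the twisted Laplacian is the weight of the `ρ`-twisted
  matroid (`twistedWeight_eq`). This is a matrix-tree theorem for unitary gains
  (`pdet_univ_subLap`): the Cauchy–Binet formula writes the minor as a sum over edge sets `T` of
  the right cardinality. A term is nonzero exactly when the only horizontal section along `T`
  supported on the given vertices is zero, that is, when the complement of `T` is a basis. It is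
  then a product over the components: a tree rooted at a deleted vertex contributes `1`, and a
  unicyclic component contributes `|1 - z|²` with `z` the gain of its cycle.
* For `ρ = 1` the block without scaling has determinant `N |V(X)|² |Jac(X)|`.
* A vertex `v` occurs for `N / |D(v)|` characters (`card_char_triv`), so the scalings contribute
  `∏ |D(v)| ^ (N / |D(v)|)`.

Cancelling `N |V(X)|²` gives the formula (`card_mul_numSpanningTrees`).
-/

set_option autoImplicit false
set_option maxHeartbeats 1000000

/-- A graph in the sense of Serre: a finite set of vertices, a finite set of
half-edges with a fixed-point-free involution, and a root map. -/
structure SerreGraph where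
  V : Type
  H : Type
  fintypeV : Fintype V
  fintypeH : Fintype H
  decEqV : DecidableEq V
  decEqH : DecidableEq H
  inv : H → H
  inv_inv : ∀ h, inv (inv h) = h
  inv_ne : ∀ h, inv h ≠ h
  root : H → V

attribute [instance] SerreGraph.fintypeV SerreGraph.fintypeH SerreGraph.decEqV SerreGraph.decEqH

namespace SerreGraph

/-- Edges are orbits `{h, inv h}` of the involution. -/
def Edge (X : SerreGraph) : Type := Quot (fun h h' : X.H => h' = X.inv h)

/-- The edge underlying a half-edge. -/
def edgeOf (X : SerreGraph) (h : X.H) : X.Edge := Quot.mk _ h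

lemma edgeOf_surjective (X : SerreGraph) : Function.Surjective X.edgeOf :=
  fun e => Quot.exists_rep e

lemma edgeOf_inv (X : SerreGraph) (h : X.H) : X.edgeOf (X.inv h) = X.edgeOf h :=
  Quot.sound (X.inv_inv h).symm

instance (X : SerreGraph) : Finite X.Edge := Quot.finite _
noncomputable instance (X : SerreGraph) : Fintype X.Edge := Fintype.ofFinite _
noncomputable instance (X : SerreGraph) : DecidableEq X.Edge := Classical.decEq _

/-- One step of adjacency in the graph obtained by deleting the edges in `F`. -/
def adjStep (X : SerreGraph) (F : Finset X.Edge) (u v : X.V) : Prop :=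
  ∃ h : X.H, X.root h = u ∧ X.root (X.inv h) = v ∧ X.edgeOf h ∉ F

/-- `u` and `v` lie in the same connected component of `X ∖ F`. -/
def compRel (X : SerreGraph) (F : Finset X.Edge) (u v : X.V) : Prop :=
  Relation.ReflTransGen (X.adjStep F) u v

/-- A graph is connected if it is nonempty and any two vertices are joined by a path. -/
def Connected (X : SerreGraph) : Prop :=
  Nonempty X.V ∧ ∀ u v : X.V, X.compRel ∅ u v

/-- The vertex set of the connected component of `v` in `X ∖ F`. -/
noncomputable def compVerts (X : SerreGraph) (F : Finset X.Edge) (v : X.V) : Finset X.V :=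
  (Set.toFinite {u | X.compRel F v u}).toFinset

/-- The set of connected components (as vertex sets) of `X ∖ F`. -/
noncomputable def components (X : SerreGraph) (F : Finset X.Edge) : Finset (Finset X.V) :=
  Finset.univ.image (X.compVerts F)

/-- The edges of `X ∖ F` belonging to a component with vertex set `C`. -/
noncomputable def edgesIn (X : SerreGraph) (F : Finset X.Edge) (C : Finset X.V) :
    Finset X.Edge :=
  (Set.toFinite {e | e ∉ F ∧ ∃ h, X.edgeOf h = e ∧ X.root h ∈ C}).toFinset

/-- A spanning tree: a spanning-connected set of edges of cardinality `|V| - 1`. -/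
def IsSpanningTree (X : SerreGraph) (T : Finset X.Edge) : Prop :=
  (∀ u v : X.V, Relation.ReflTransGen
      (fun a b => ∃ h, X.root h = a ∧ X.root (X.inv h) = b ∧ X.edgeOf h ∈ T) u v) ∧
  T.card + 1 = Fintype.card X.V

noncomputable def spanningTrees (X : SerreGraph) : Finset (Finset X.Edge) :=
  (Set.toFinite {T | X.IsSpanningTree T}).toFinset

/-- The number of spanning trees of `X`; by Kirchhoff's theorem this is `|Jac(X)|`. -/
noncomputable def numSpanningTrees (X : SerreGraph) : ℕ := X.spanningTrees.card

/-- The genus `g(X) = |E(X)| - |V(X)| + 1` of a (connected) graph. -/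
noncomputable def genus (X : SerreGraph) : ℕ :=
  Fintype.card X.Edge + 1 - Fintype.card X.V

/-- The Jacobian polynomial `J_X = ∑_T ∏_{e ∉ T} x_e`, summed over spanning trees. -/
noncomputable def jacobianPoly (X : SerreGraph) (R : Type) [CommRing R] :
    MvPolynomial X.Edge R :=
  ∑ T ∈ X.spanningTrees, ∏ e ∈ Tᶜ, MvPolynomial.X e

/-- A closed path: a nonempty list of half-edges, consecutively matched head-to-tail,
including from the last one back to the first. -/
def IsClosedPath (X : SerreGraph) (l : List X.H) : Prop :=
  l ≠ [] ∧ List.Chain' (fun a b => X.root (X.inv a) = X.root b) (l ++ l.take 1)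

/-- A cycle with pairwise distinct edges, all belonging to `S`. -/
def IsEdgeCycle (X : SerreGraph) (S : Finset X.Edge) (l : List X.H) : Prop :=
  X.IsClosedPath l ∧ (∀ h ∈ l, X.edgeOf h ∈ S) ∧ (l.map X.edgeOf).Nodup

/-- An edge is a loop if its two root vertices coincide. -/
def IsLoop (X : SerreGraph) (e : X.Edge) : Prop :=
  ∃ h, X.edgeOf h = e ∧ X.root h = X.root (X.inv h)

/-- An orientation: a choice of half-edge (source half) for every edge. -/
structure Orientation (X : SerreGraph) where
  pick : X.Edge → X.H
  pick_spec : ∀ e, X.edgeOf (pick e) = e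

/-- The voltage of a half-edge: `η(e)` if it is traversed in the chosen orientation,
`η(e)⁻¹` otherwise. -/
def halfVoltage {G : Type} [Group G] (X : SerreGraph) (o : X.Orientation)
    (η : X.Edge → G) (h : X.H) : G :=
  if h = o.pick (X.edgeOf h) then η (X.edgeOf h) else (η (X.edgeOf h))⁻¹

/-- The (Frobenius) voltage of a path of half-edges. -/
def pathVoltage {G : Type} [Group G] (X : SerreGraph) (o : X.Orientation)
    (η : X.Edge → G) (l : List X.H) : G :=
  (l.map (X.halfVoltage o η)).prod

/-- A morphism of Serre graphs. -/
structure Hom (X Y : SerreGraph) where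
  vMap : X.V → Y.V
  hMap : X.H → Y.H
  hMap_inv : ∀ h, hMap (X.inv h) = Y.inv (hMap h)
  root_hMap : ∀ h, Y.root (hMap h) = vMap (X.root h)

/-- The induced map on edges. -/
def Hom.edgeMap {X Y : SerreGraph} (f : Hom X Y) : X.Edge → Y.Edge :=
  Quot.map f.hMap (fun a b hab => by rw [hab, f.hMap_inv])

/-- A morphism is harmonic with local degree function `d` if for every vertex `v`
upstairs and every half-edge `h` rooted at its image, `d v` is the number of
half-edges at `v` mapping to `h`. -/
structure IsHarmonic {X Y : SerreGraph} (f : Hom X Y) (d : X.V → ℕ) : Prop where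
  pos : ∀ v, 0 < d v
  balanced : ∀ (v : X.V) (h : Y.H), Y.root h = f.vMap v →
    d v = Nat.card {h' : X.H // X.root h' = v ∧ f.hMap h' = h}

/-- A harmonic Galois cover with Galois group `G`: a harmonic morphism of degree `|G|`
together with an equivariant `G`-action that is transitive on vertex fibers and simply
transitive on edge fibers. -/
structure GCover (G : Type) [Group G] [Fintype G] (Xt X : SerreGraph)
    extends Hom Xt X where
  d : Xt.V → ℕ
  harm : IsHarmonic toHom d
  deg_eq : ∀ v : X.V,
    ∑ w ∈ Finset.univ.filter (fun w => toHom.vMap w = v), d w = Fintype.card G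
  smulV : G → Xt.V → Xt.V
  smulH : G → Xt.H → Xt.H
  one_smulV : ∀ w, smulV 1 w = w
  mul_smulV : ∀ g g' w, smulV (g * g') w = smulV g (smulV g' w)
  one_smulH : ∀ h, smulH 1 h = h
  mul_smulH : ∀ g g' h, smulH (g * g') h = smulH g (smulH g' h)
  smulH_inv : ∀ g h, smulH g (Xt.inv h) = Xt.inv (smulH g h)
  root_smulH : ∀ g h, Xt.root (smulH g h) = smulV g (Xt.root h)
  vMap_smulV : ∀ g w, toHom.vMap (smulV g w) = toHom.vMap w
  hMap_smulH : ∀ g h, toHom.hMap (smulH g h) = toHom.hMap h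
  d_smulV : ∀ g w, d (smulV g w) = d w
  vertex_trans : ∀ w w' : Xt.V, toHom.vMap w = toHom.vMap w' → ∃ g, smulV g w = w'
  edge_trans : ∀ ht ht' : Xt.H,
    (toHom.hMap ht' = toHom.hMap ht ∨ toHom.hMap ht' = X.inv (toHom.hMap ht)) →
    ∃ g, smulH g ht = ht' ∨ smulH g ht = Xt.inv ht'
  edge_free : ∀ (g : G) (ht : Xt.H),
    (smulH g ht = ht ∨ smulH g ht = Xt.inv ht) → g = 1

namespace GCover

variable {G : Type} [Group G] [Fintype G] {Xt X : SerreGraph}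

/-- The cover is free if all local degrees are one. -/
def IsFree (c : GCover G Xt X) : Prop := ∀ w, c.d w = 1

/-- The dilation subgroup of a vertex: the common stabilizer of the vertices in its fiber. -/
def dilation (c : GCover G Xt X) (v : X.V) : Set G :=
  {g | ∀ w : Xt.V, c.vMap w = v → c.smulV g w = w}

/-- One step of adjacency upstairs, through half-edges lying over `X ∖ F`. -/
def liftStep (c : GCover G Xt X) (F : Finset X.Edge) (a b : Xt.V) : Prop :=
  ∃ ht : Xt.H, Xt.root ht = a ∧ Xt.root (Xt.inv ht) = b ∧ X.edgeOf (c.hMap ht) ∉ F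

/-- The number of connected components of the preimage of the component of `v` in `X ∖ F`. -/
noncomputable def numLiftComponents (c : GCover G Xt X) (F : Finset X.Edge) (v : X.V) : ℕ :=
  Nat.card (Quot (fun a b : {w : Xt.V // X.compRel F v (c.vMap w)} => c.liftStep F a.1 b.1))

/-- The connected component of `v` in `X ∖ F` is `G`-nontrivial, i.e. the restriction of the
cover over it is not isomorphic to the trivial `G`-cover (equivalently, its preimage does
not have exactly `|G|` connected components). -/
def GNontrivialAt (c : GCover G Xt X) (F : Finset X.Edge) (v : X.V) : Prop :=
  c.numLiftComponents F v ≠ Fintype.card G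

/-- Independent sets of the matroid `M*(X̃/X)`. -/
def Indep (c : GCover G Xt X) (F : Finset X.Edge) : Prop :=
  ∀ v : X.V, c.GNontrivialAt F v

/-- Bases of the matroid `M*(X̃/X)`: maximal independent sets. -/
def IsBasisD (c : GCover G Xt X) (F : Finset X.Edge) : Prop :=
  c.Indep F ∧ ∀ F' : Finset X.Edge, F ⊆ F' → c.Indep F' → F' = F

/-- The dilated `G`-voltage assignment `η` (together with a section `σ` of the vertex map)
represents the cover: for each edge `e`, some lift of `e` runs from `σ(s(e))` to
`η(e) • σ(t(e))`. -/
structure IsVoltageRep (c : GCover G Xt X) (o : X.Orientation) (σ : X.V → Xt.V)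
    (η : X.Edge → G) : Prop where
  sec : ∀ v, c.vMap (σ v) = v
  lift : ∀ e : X.Edge, ∃ ht : Xt.H, c.hMap ht = o.pick e ∧
    Xt.root ht = σ (X.root (o.pick e)) ∧
    Xt.root (Xt.inv ht) = c.smulV (η e) (σ (X.root (X.inv (o.pick e))))

/-- The component of `v` in `X ∖ F` is nontrivial for the cover twisted by the character
`ρ`: it contains a vertex whose dilation group has nontrivial image under `ρ`, or a closed
path whose voltage has nontrivial image under `ρ`. -/
def RhoNontrivialAt (c : GCover G Xt X) (o : X.Orientation) (η : X.Edge → G)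
    (ρ : G →* ℂ) (F : Finset X.Edge) (v : X.V) : Prop :=
  (∃ u : X.V, X.compRel F v u ∧ ∃ g ∈ c.dilation u, ρ g ≠ 1) ∨
  (∃ l : List X.H, X.IsClosedPath l ∧
    (∀ h ∈ l, X.edgeOf h ∉ F ∧ X.compRel F v (X.root h)) ∧
    ρ (X.pathVoltage o η l) ≠ 1)

/-- Bases of the `ρ`-twisted matroid `M*(X̃/X, ρ)`: maximal subsets `F` such that every
connected component of `X ∖ F` is `ρ`-nontrivial. -/
def IsBasisRho (c : GCover G Xt X) (o : X.Orientation) (η : X.Edge → G)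
    (ρ : G →* ℂ) (F : Finset X.Edge) : Prop :=
  (∀ v : X.V, c.RhoNontrivialAt o η ρ F v) ∧
  ∀ F' : Finset X.Edge, F ⊆ F' → (∀ v : X.V, c.RhoNontrivialAt o η ρ F' v) → F' = F

end GCover

/-- The weight of a connected component with edge set `S`: `|1 - ρ(η(C))|²` where `η(C)` is
the voltage of its unique cycle, if it has one, and `1` otherwise (tree components). -/
noncomputable def cycleWeight {G : Type} [Group G] (X : SerreGraph) (o : X.Orientation)
    (η : X.Edge → G) (ρ : G →* ℂ) (S : Finset X.Edge) : ℝ := by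
  classical exact
  if hc : ∃ l, X.IsEdgeCycle S l then
    ‖(1 : ℂ) - ρ (X.pathVoltage o η hc.choose)‖ ^ 2
  else 1

/-- The weight `w_ρ(F)`: the product of the weights of the connected components of `X ∖ F`. -/
noncomputable def basisWeight {G : Type} [Group G] (X : SerreGraph) (o : X.Orientation)
    (η : X.Edge → G) (ρ : G →* ℂ) (F : Finset X.Edge) : ℝ :=
  ∏ C ∈ X.components F, cycleWeight X o η ρ (X.edgesIn F C)

/-- The weight `w(M*(X̃/X, ρ))` of the `ρ`-twisted matroid: the sum of the weights of its
bases. -/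
noncomputable def GCover.twistedWeight {G : Type} [Group G] [Fintype G] {Xt X : SerreGraph}
    (c : GCover G Xt X) (o : X.Orientation) (η : X.Edge → G) (ρ : G →* ℂ) : ℝ :=
  ∑ F ∈ (Set.toFinite {F : Finset X.Edge | c.IsBasisRho o η ρ F}).toFinset,
    basisWeight X o η ρ F

/-- The weight polynomial `P_{X̃/X,ρ} = ∑_F w_ρ(F) ∏_{e ∈ F} x_e` of the `ρ`-twisted
matroid, summed over its bases. -/
noncomputable def GCover.twistedWeightPoly {G : Type} [Group G] [Fintype G]
    {Xt X : SerreGraph} (c : GCover G Xt X) (o : X.Orientation) (η : X.Edge → G)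
    (ρ : G →* ℂ) : MvPolynomial X.Edge ℝ :=
  ∑ F ∈ (Set.toFinite {F : Finset X.Edge | c.IsBasisRho o η ρ F}).toFinset,
    MvPolynomial.C (basisWeight X o η ρ F) * ∏ e ∈ F, MvPolynomial.X e

end SerreGraph
namespace SerreGraph

/-- One contraction step: `a` and `b` are joined by an edge belonging to `F`. -/
def contractStep (X : SerreGraph) (F : Finset X.Edge) (a b : X.V) : Prop :=
  ∃ h, X.edgeOf h ∈ F ∧ X.root h = a ∧ X.root (X.inv h) = b

/-- Data exhibiting `Xc` as the contraction of `X` along the edge set `F`: the vertices of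
`Xc` are the connected components of the subgraph spanned by `F`, and the half-edges of `Xc`
are the half-edges of `X` not lying on `F`. -/
structure ContractionData (X Xc : SerreGraph) (F : Finset X.Edge) where
  vMap : X.V → Xc.V
  hMap : (h : X.H) → X.edgeOf h ∉ F → Xc.H
  hMap_injective : ∀ h₁ hh₁ h₂ hh₂, hMap h₁ hh₁ = hMap h₂ hh₂ → h₁ = h₂
  hMap_surjective : ∀ k : Xc.H, ∃ h hh, hMap h hh = k
  hMap_inv : ∀ h hh hh', hMap (X.inv h) hh' = Xc.inv (hMap h hh)
  root_hMap : ∀ h hh, Xc.root (hMap h hh) = vMap (X.root h)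
  vMap_surjective : Function.Surjective vMap
  vMap_eq_iff : ∀ u v, vMap u = vMap v ↔ Relation.ReflTransGen (X.contractStep F) u v

/-- The valency of a vertex (loops counted twice). -/
noncomputable def valency (X : SerreGraph) (v : X.V) : ℕ :=
  Nat.card {h : X.H // X.root h = v}

/-- The Laplacian matrix `L = Q - A` of a graph. -/
noncomputable def lapl (X : SerreGraph) : Matrix X.V X.V ℤ :=
  Matrix.of fun u v =>
    (if u = v then (X.valency u : ℤ) else 0) -
      (Nat.card {h : X.H // X.root h = u ∧ X.root (X.inv h) = v} : ℤ)

/-- The Laplacian as a homomorphism on divisors. -/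
noncomputable def laplHom (X : SerreGraph) : (X.V → ℤ) →+ (X.V → ℤ) where
  toFun := fun D u => ∑ v, X.lapl u v * D v
  map_zero' := by funext u; simp
  map_add' := by
    intro a b; funext u
    simp [mul_add, Finset.sum_add_distrib]

/-- Divisors of total degree zero. -/
noncomputable def div0 (X : SerreGraph) : AddSubgroup (X.V → ℤ) where
  carrier := {D | ∑ v, D v = 0}
  add_mem' := by
    intro a b ha hb
    simp only [Set.mem_setOf_eq, Pi.add_apply] at *
    simp [Finset.sum_add_distrib, ha, hb]
  zero_mem' := by simp
  neg_mem' := by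
    intro a ha
    simp only [Set.mem_setOf_eq, Pi.neg_apply] at *
    simp [ha]

/-- The subgroup of principal divisors: the image of the Laplacian. -/
noncomputable def principal (X : SerreGraph) : AddSubgroup (X.V → ℤ) :=
  (laplHom X).range

/-- The Jacobian (critical) group `Jac(X) = Div₀(X) / Im L`. -/
noncomputable def jac (X : SerreGraph) : Type :=
  X.div0 ⧸ ((X.principal).addSubgroupOf X.div0)

noncomputable instance (X : SerreGraph) : AddCommGroup X.jac :=
  inferInstanceAs (AddCommGroup (X.div0 ⧸ ((X.principal).addSubgroupOf X.div0)))

/-- The pushforward of divisors along a graph morphism. -/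
noncomputable def pushforward {Xt X : SerreGraph} (f : Hom Xt X) (D : Xt.V → ℤ) :
    X.V → ℤ :=
  fun v => ∑ w ∈ Finset.univ.filter (fun w => f.vMap w = v), D w

/-- The diagonal valency matrix `Q` (over `ℂ`). -/
noncomputable def qMatrix (X : SerreGraph) : Matrix X.V X.V ℂ :=
  Matrix.of fun u v => if u = v then (X.valency u : ℂ) else 0

/-- The `ρ`-twisted adjacency matrix `A_ρ`. -/
noncomputable def twistedAdj {G : Type} [Group G] (X : SerreGraph) (o : X.Orientation)
    (η : X.Edge → G) (ρ : G →* ℂ) : Matrix X.V X.V ℂ :=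
  Matrix.of fun u v =>
    (∑ e ∈ Finset.univ.filter
        (fun e => X.root (o.pick e) = u ∧ X.root (X.inv (o.pick e)) = v), ρ (η e)) +
    (∑ e ∈ Finset.univ.filter
        (fun e => X.root (o.pick e) = v ∧ X.root (X.inv (o.pick e)) = u),
          (starRingEnd ℂ) (ρ (η e)))

/-- The `ρ`-twisted Laplacian `L_ρ = Q - A_ρ`. -/
noncomputable def twistedLapl {G : Type} [Group G] (X : SerreGraph) (o : X.Orientation)
    (η : X.Edge → G) (ρ : G →* ℂ) : Matrix X.V X.V ℂ :=
  X.qMatrix - X.twistedAdj o η ρ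

/-- The reciprocal `ζ_M(s, x_e, X)⁻¹ = det(I - W)` of the metric zeta function, where `W`
is the edge matrix with entries `s^{x_e}` (two-term determinant formula). -/
noncomputable def zetaMInv (X : SerreGraph) (x : X.Edge → ℝ) (s : ℝ) : ℝ :=
  Matrix.det ((1 : Matrix X.H X.H ℝ) - Matrix.of fun a b : X.H =>
    if X.root (X.inv a) = X.root b ∧ b ≠ X.inv a then s ^ (x (X.edgeOf a)) else 0)

/-- The reciprocal of the Ihara zeta function: the metric zeta with all lengths one. -/
noncomputable def zetaInv (X : SerreGraph) (s : ℝ) : ℝ :=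
  X.zetaMInv (fun _ => 1) s

/-- The reciprocal `L_M(s, x_e, X̃/X, ρ)⁻¹ = det(I - W_ρ)` of the metric Artin `L`-function
of the cover defined by the voltage assignment `η` (two-term determinant formula). -/
noncomputable def LMInv {G : Type} [Group G] (X : SerreGraph) (o : X.Orientation)
    (η : X.Edge → G) (ρ : G →* ℂ) (x : X.Edge → ℝ) (s : ℝ) : ℂ :=
  Matrix.det ((1 : Matrix X.H X.H ℂ) - Matrix.of fun a b : X.H =>
    if X.root (X.inv a) = X.root b ∧ b ≠ X.inv a then
      ρ (X.halfVoltage o η a) * ((s ^ (x (X.edgeOf a)) : ℝ) : ℂ)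
    else 0)

/-- The weight polynomial of a free cover defined by the voltage assignment `η`, twisted by
`ρ`: the sum over all `(g-1)`-element edge sets `F` all of whose complementary components
have genus one of `∏ᵢ |1 - ρ(η(Xᵢ))|² ∏_{e ∈ F} x_e`. -/
noncomputable def freeWeightPoly {G : Type} [Group G] (X : SerreGraph)
    (o : X.Orientation) (η : X.Edge → G) (ρ : G →* ℂ) : MvPolynomial X.Edge ℝ :=
  ∑ F ∈ (Set.toFinite {F : Finset X.Edge |
      F.card + Fintype.card X.V = Fintype.card X.Edge ∧
      ∀ C ∈ X.components F, (X.edgesIn F C).card = C.card}).toFinset,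
    MvPolynomial.C (basisWeight X o η ρ F) * ∏ e ∈ F, MvPolynomial.X e

/-- The `j`-th vertex on the chain subdividing the edge `e` into `n e` parts. -/
noncomputable def subVertex (X : SerreGraph) (o : X.Orientation) (n : X.Edge → ℕ)
    (e : X.Edge) (j : ℕ) : X.V ⊕ ((e : X.Edge) × Fin (n e - 1)) :=
  if _h0 : j = 0 then Sum.inl (X.root (o.pick e))
  else if h : j < n e then Sum.inr ⟨e, ⟨j - 1, by omega⟩⟩
  else Sum.inl (X.root (X.inv (o.pick e)))

/-- The graph obtained from `X` by replacing each edge `e` by a chain of `n e` edges. -/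
noncomputable def subdivide (X : SerreGraph) (o : X.Orientation) (n : X.Edge → ℕ) :
    SerreGraph where
  V := X.V ⊕ ((e : X.Edge) × Fin (n e - 1))
  H := (e : X.Edge) × (Fin (n e) × Bool)
  fintypeV := inferInstance
  fintypeH := inferInstance
  decEqV := Classical.decEq _
  decEqH := Classical.decEq _
  inv := fun p => ⟨p.1, (p.2.1, !p.2.2)⟩
  inv_inv := by rintro ⟨e, i, b⟩; simp
  inv_ne := by rintro ⟨e, i, b⟩ hcon; simp at hcon
  root := fun p => X.subVertex o n p.1 (if p.2.2 then (p.2.1 : ℕ) + 1 else (p.2.1 : ℕ))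

end SerreGraph

/-- The cycle graph with `k` vertices, every pair of cyclically adjacent vertices joined by
`M` parallel edges. -/
def cycleGraph (k M : ℕ) : SerreGraph where
  V := Fin k
  H := Fin k × Fin M × Bool
  fintypeV := inferInstance
  fintypeH := inferInstance
  decEqV := inferInstance
  decEqH := inferInstance
  inv := fun p => (p.1, p.2.1, !p.2.2)
  inv_inv := by rintro ⟨i, j, b⟩; simp
  inv_ne := by rintro ⟨i, j, b⟩ hcon; simp at hcon
  root := fun p => if p.2.2 then finRotate k p.1 else p.1

/-! ### Principal minors and the Cauchy–Binet formula -/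

namespace SerreGraph

/-- The principal minor of `A` on the index set `W`. -/
noncomputable def pdet {ι R : Type*} [CommRing R] [DecidableEq ι] (W : Finset ι)
    (A : Matrix ι ι R) : R :=
  (A.submatrix (Subtype.val : W → ι) Subtype.val).det

lemma pdet_univ {ι R : Type*} [CommRing R] [DecidableEq ι] [Fintype ι]
    (A : Matrix ι ι R) : pdet Finset.univ A = A.det := by
  unfold pdet
  have := Matrix.det_submatrix_equiv_self
    (Equiv.subtypeUnivEquiv (fun x : ι => Finset.mem_univ x)) A
  rw [← this]
  rfl

lemma pdet_congr {ι R : Type*} [CommRing R] [DecidableEq ι] {W : Finset ι}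
    {A B : Matrix ι ι R} (h : ∀ i ∈ W, ∀ j ∈ W, A i j = B i j) : pdet W A = pdet W B := by
  unfold pdet
  congr 1
  ext i j
  exact h _ i.2 _ j.2

/-- A matrix that is block diagonal for the partition of the index set into the fibres of `b`
has the product of the principal minors on the blocks as determinant. -/
lemma pdet_eq_prod {ι α R : Type*} [CommRing R] [DecidableEq ι] [DecidableEq α]
    (W : Finset ι) (b : ι → α) (A : Matrix ι ι R) (T : Finset α) (hT : ∀ i ∈ W, b i ∈ T)
    (hA : ∀ i ∈ W, ∀ j ∈ W, b i ≠ b j → A i j = 0) :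
    pdet W A = ∏ a ∈ T, pdet (W.filter (fun i => b i = a)) A := by
  classical
  let _ : LinearOrder α := linearOrderOfSTO WellOrderingRel
  have h1 : Matrix.BlockTriangular (A.submatrix (Subtype.val : W → ι) Subtype.val)
      (fun i : W => b i) := by
    intro i j hij
    exact hA _ i.2 _ j.2 (ne_of_gt hij)
  unfold pdet
  rw [h1.det]
  rw [Finset.prod_subset (s₁ := Finset.univ.image (fun i : W => b i)) (s₂ := T)]
  · refine Finset.prod_congr rfl fun a _ => ?_
    let e : {i : W // b i = a} ≃ {i // i ∈ W.filter (fun i => b i = a)} :=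
      { toFun := fun i => ⟨i.1.1, Finset.mem_filter.2 ⟨i.1.2, i.2⟩⟩
        invFun := fun i => ⟨⟨i.1, (Finset.mem_filter.1 i.2).1⟩, (Finset.mem_filter.1 i.2).2⟩
        left_inv := fun i => rfl
        right_inv := fun i => rfl }
    rw [← Matrix.det_submatrix_equiv_self e]
    unfold Matrix.toSquareBlock Matrix.toSquareBlockProp
    convert rfl
    ext i j
    rfl
  · intro a ha
    obtain ⟨i, -, rfl⟩ := Finset.mem_image.1 ha
    exact hT _ i.2
  · intro a _ ha
    have : IsEmpty {i : W // b i = a} :=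
      ⟨fun i => ha (Finset.mem_image.2 ⟨i.1, Finset.mem_univ _, i.2⟩)⟩
    exact Matrix.det_isEmpty

/-- Expansion of a principal minor along column `r` when that column vanishes off the diagonal. -/
lemma pdet_of_col {ι R : Type*} [CommRing R] [DecidableEq ι] (W : Finset ι) (r : ι) (hr : r ∈ W)
    (A : Matrix ι ι R) (hA : ∀ i ∈ W, i ≠ r → A i r = 0) :
    pdet W A = A r r * pdet (W.erase r) A := by
  unfold pdet
  rw [Matrix.twoBlockTriangular_det _ (fun i : W => (i : ι) = r)]
  · congr 1
    · let e : Unit ≃ {i : W // (i : ι) = r} :=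
        { toFun := fun _ => ⟨⟨r, hr⟩, rfl⟩
          invFun := fun _ => ()
          left_inv := fun _ => rfl
          right_inv := fun i => by ext; exact i.2.symm }
      rw [← Matrix.det_submatrix_equiv_self e]
      simp [Matrix.toSquareBlockProp, e]
    · let e : {i : W // ¬ (i : ι) = r} ≃ {i // i ∈ W.erase r} :=
        { toFun := fun i => ⟨i.1.1, Finset.mem_erase.2 ⟨i.2, i.1.2⟩⟩
          invFun := fun i => ⟨⟨i.1, (Finset.mem_erase.1 i.2).2⟩, (Finset.mem_erase.1 i.2).1⟩
          left_inv := fun i => rfl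
          right_inv := fun i => rfl }
      rw [← Matrix.det_submatrix_equiv_self e]
      rfl
  · intro i hi j hj
    have : (j : ι) = r := hj
    change A i j = 0
    rw [this]
    exact hA _ i.2 hi

/-- Rank-one perturbation of a matrix whose row and column `r` vanish. -/
lemma pdet_add_rankOne {ι K : Type*} [Field K] [DecidableEq ι] (W : Finset ι) (r : ι)
    (hr : r ∈ W) (A : Matrix ι ι K) (a b : ι → K) (hrow : ∀ j ∈ W, A r j = 0)
    (hcol : ∀ i ∈ W, A i r = 0) :
    pdet W (A + Matrix.vecMulVec a b) = a r * b r * pdet (W.erase r) A := by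
  by_cases ha : a r = 0
  · rw [ha, zero_mul, zero_mul]
    unfold pdet
    apply Matrix.det_eq_zero_of_row_eq_zero ⟨r, hr⟩
    intro j
    simp [Matrix.vecMulVec_apply, ha, hrow _ j.2]
  · let B : Matrix ι ι K := Matrix.of fun i j => if i = r then a r * b j else A i j
    have h1 : pdet W (A + Matrix.vecMulVec a b) = pdet W B := by
      unfold pdet
      apply Matrix.det_eq_of_forall_row_eq_smul_add_const
        (fun i : W => if (i : ι) = r then 0 else a i / a r) ⟨r, hr⟩
      · simp
      · intro i j
        by_cases hi : (i : ι) = r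
        · simp [B, hi, Matrix.vecMulVec_apply, hrow _ j.2]
        · simp only [B, hi, Matrix.vecMulVec_apply, Matrix.submatrix_apply, Matrix.add_apply,
            Matrix.of_apply, if_false, if_true]
          field_simp
    rw [h1, pdet_of_col W r hr B]
    · simp only [B, Matrix.of_apply, if_true]
      congr 1
      apply pdet_congr
      intro i hi j hj
      simp [B, Finset.ne_of_mem_erase hi]
    · intro i hi hir
      simp [B, hir, hcol i hi]

/-- The matrix `∑_{e ∈ S} A_{·e} B_{e·}`. -/
def partialMul {ι ε R : Type*} [CommRing R] (A : Matrix ι ε R) (B : Matrix ε ι R)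
    (S : Finset ε) : Matrix ι ι R :=
  Matrix.of fun u v => ∑ e ∈ S, A u e * B e v

/-- Expanding the determinant row by row gives a sum over maps `f : m → S`, of which only the
injective ones contribute. -/
lemma det_partialMul {m ε R : Type*} [CommRing R] [Fintype m] [DecidableEq m] [Fintype ε]
    [DecidableEq ε] (A : Matrix m ε R) (B : Matrix ε m R) (S : Finset ε) :
    (partialMul A B S).det = ∑ f ∈ Finset.univ.filter
      (fun f : m → ε => Function.Injective f ∧ ∀ i, f i ∈ S),
      (∏ i, A i (f i)) * (B.submatrix f id).det := by
  have h1 : (partialMul A B S).det =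
      Matrix.detRowAlternating (fun i : m => ∑ e ∈ S, A i e • B e) := by
    congr 1
    ext i j
    simp [partialMul]
  rw [h1]
  change (Matrix.detRowAlternating (R := R) (n := m)).toMultilinearMap _ = _
  rw [MultilinearMap.map_sum_finset]
  have h2 : ∀ f : m → ε, (Matrix.detRowAlternating (R := R) (n := m)).toMultilinearMap
      (fun i => A i (f i) • B (f i)) = (∏ i, A i (f i)) * (B.submatrix f id).det := by
    intro f
    rw [MultilinearMap.map_smul_univ]
    rfl
  simp only [h2]
  have h3 : Finset.univ.filter (fun f : m → ε => Function.Injective f ∧ ∀ i, f i ∈ S) =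
      (Fintype.piFinset fun _ => S).filter (fun f => Function.Injective f) := by
    ext f
    simp [and_comm]
  rw [h3, Finset.sum_filter_of_ne]
  intro f _ hf
  by_contra hinj
  apply hf
  simp only [Function.Injective, not_forall] at hinj
  obtain ⟨i, j, hij, hne⟩ := hinj
  rw [Matrix.det_zero_of_row_eq hne, mul_zero]
  ext k
  simp [hij]

/-- The Cauchy–Binet formula, for partial products. -/
lemma cauchyBinet_aux {m ε R : Type*} [CommRing R] [Fintype m] [DecidableEq m] [Fintype ε]
    [DecidableEq ε] (A : Matrix m ε R) (B : Matrix ε m R) (S : Finset ε) :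
    (partialMul A B S).det =
      ∑ T ∈ S.powersetCard (Fintype.card m), (partialMul A B T).det := by
  simp only [det_partialMul]
  have hL : ∀ f ∈ Finset.univ.filter
      (fun f : m → ε => Function.Injective f ∧ ∀ i, f i ∈ S),
      Finset.univ.image f ∈ S.powersetCard (Fintype.card m) := by
    intro f hf
    simp only [Finset.mem_filter, Finset.mem_univ, true_and] at hf
    rw [Finset.mem_powersetCard, Finset.card_image_of_injective _ hf.1]
    refine ⟨?_, rfl⟩
    intro x hx
    obtain ⟨i, -, rfl⟩ := Finset.mem_image.1 hx
    exact hf.2 i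
  rw [← Finset.sum_fiberwise_of_maps_to hL]
  refine Finset.sum_congr rfl fun T hT => ?_
  refine Finset.sum_congr ?_ fun _ _ => rfl
  rw [Finset.mem_powersetCard] at hT
  ext f
  simp only [Finset.mem_filter, Finset.mem_univ, true_and]
  constructor
  · rintro ⟨⟨hf, -⟩, rfl⟩
    exact ⟨hf, fun i => Finset.mem_image_of_mem _ (Finset.mem_univ i)⟩
  · rintro ⟨hf, hfT⟩
    refine ⟨⟨hf, fun i => hT.1 (hfT i)⟩, ?_⟩
    apply Finset.eq_of_subset_of_card_le
    · intro x hx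
      obtain ⟨i, -, rfl⟩ := Finset.mem_image.1 hx
      exact hfT i
    · rw [Finset.card_image_of_injective _ hf, hT.2, Finset.card_univ]

/-- The Cauchy–Binet formula for principal minors of partial products. -/
lemma cauchyBinet {ι ε R : Type*} [CommRing R] [DecidableEq ι] [Fintype ε]
    [DecidableEq ε] (W : Finset ι) (A : Matrix ι ε R) (B : Matrix ε ι R) (S : Finset ε) :
    pdet W (partialMul A B S) =
      ∑ T ∈ S.powersetCard W.card, pdet W (partialMul A B T) := by
  have := cauchyBinet_aux (A.submatrix (Subtype.val : W → ι) id)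
    (B.submatrix id (Subtype.val : W → ι)) S
  rw [Fintype.card_coe] at this
  exact this

/-- Replacing row `r` by the combination of the rows with coefficients `x`, and then column `r`
by the combination of the columns with coefficients `y`, multiplies the determinant by
`x r * y r`. -/
lemma pdet_congruence {ι R : Type*} [CommRing R] [DecidableEq ι] (W : Finset ι)
    (r : ι) (hr : r ∈ W) (A : Matrix ι ι R) (x y : ι → R) :
    pdet W (Matrix.of fun i j =>
      if i = r then (if j = r then ∑ k ∈ W, ∑ l ∈ W, x k * A k l * y l else ∑ k ∈ W, x k * A k j)
      else (if j = r then ∑ l ∈ W, A i l * y l else A i j)) = x r * y r * pdet W A := by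
  classical
  set r' : W := ⟨r, hr⟩
  set A' := A.submatrix (Subtype.val : W → ι) Subtype.val
  have h1 : (Matrix.updateRow (1 : Matrix W W R) r' (fun k => x k)).det = x r := by
    have := Matrix.cramer_transpose_apply (1 : Matrix W W R) (fun k => x k) r'
    rw [← this]
    simp [r']
  have h2 : (Matrix.updateCol (1 : Matrix W W R) r' (fun k => y k)).det = y r := by
    have := Matrix.cramer_apply (1 : Matrix W W R) (fun k => y k) r'
    rw [← this]
    simp [r']
  have h3 : (Matrix.updateRow (1 : Matrix W W R) r' (fun k => x k) * A' *
      Matrix.updateCol (1 : Matrix W W R) r' (fun k => y k)).det = x r * y r * pdet W A := by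
    rw [Matrix.det_mul, Matrix.det_mul, h1, h2]
    unfold pdet
    ring
  rw [← h3]
  unfold pdet
  congr 1
  have hrow : ∀ i j, (Matrix.updateRow (1 : Matrix W W R) r' (fun k => x k) * A') i j =
      if (i : ι) = r then ∑ k ∈ W, x k * A k j else A i j := by
    intro i j
    by_cases hi : i = r'
    · subst hi
      simp only [Matrix.mul_apply, Matrix.updateRow_self, r', if_true]
      rw [← Finset.sum_coe_sort W (fun k => x k * A k j)]
      rfl
    · have hi' : (i : ι) ≠ r := fun h => hi (Subtype.ext h)
      simp only [Matrix.mul_apply, Matrix.updateRow_ne hi, hi', if_false]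
      simp [Matrix.one_apply, A']
  ext i j
  rw [Matrix.mul_apply]
  simp only [hrow]
  by_cases hj : j = r'
  · subst hj
    simp only [Matrix.updateCol_self, Matrix.submatrix_apply, Matrix.of_apply, r', if_true]
    split_ifs with hi
    · rw [Finset.sum_comm, ← Finset.sum_coe_sort W]
      refine Finset.sum_congr rfl fun l _ => ?_
      rw [Finset.sum_mul]
    · rw [← Finset.sum_coe_sort W]
  · have hj' : (j : ι) ≠ r := fun h => hj (Subtype.ext h)
    simp only [Matrix.updateCol_ne hj, Matrix.submatrix_apply, Matrix.of_apply, hj', if_false]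
    simp [Matrix.one_apply]

end SerreGraph

/-! ### Walks, reachability and cycles -/

namespace SerreGraph
open scoped ComplexConjugate

variable {X : SerreGraph}

/-- `Walk X S u l v` says that the list of half-edges `l` is a walk from `u` to `v` all of whose edges belong to `S`. -/
def Walk (X : SerreGraph) (S : Finset X.Edge) : X.V → List X.H → X.V → Prop
  | u, [], v => u = v
  | u, h :: l, v => X.root h = u ∧ X.edgeOf h ∈ S ∧ Walk X S (X.root (X.inv h)) l v

/-- `u` and `v` are joined by a walk with edges in `S`. -/
def Reach (X : SerreGraph) (S : Finset X.Edge) (u v : X.V) : Prop := ∃ l, X.Walk S u l v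

lemma edgeOf_eq {h h' : X.H} (e : X.edgeOf h = X.edgeOf h') : h = h' ∨ h = X.inv h' := by
  have := Quot.eqvGen_exact e
  induction this with
  | rel x y hxy => right; rw [hxy, X.inv_inv]
  | refl x => left; rfl
  | symm x y h1 ih =>
    rcases ih (Quot.eqvGen_sound h1) with h | h
    · exact Or.inl h.symm
    · right; rw [h, X.inv_inv]
  | trans x y w h1 h2 ih1 ih2 =>
    rcases ih1 (Quot.eqvGen_sound h1) with h | h <;> rcases ih2 (Quot.eqvGen_sound h2) with k | k
    · exact Or.inl (h.trans k)
    · exact Or.inr (h.trans k)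
    · right; rw [h, k]
    · left; rw [h, k, X.inv_inv]

lemma pick_cases (o : X.Orientation) (h : X.H) :
    h = o.pick (X.edgeOf h) ∨ h = X.inv (o.pick (X.edgeOf h)) :=
  edgeOf_eq (o.pick_spec _).symm

lemma sum_halfEdges (o : X.Orientation) (f : X.H → ℂ) :
    ∑ h, f h = ∑ e, (f (o.pick e) + f (X.inv (o.pick e))) := by
  rw [← Finset.sum_fiberwise_of_maps_to (g := X.edgeOf) (t := Finset.univ)
    (fun _ _ => Finset.mem_univ _)]
  refine Finset.sum_congr rfl fun e _ => ?_
  have : Finset.univ.filter (fun h => X.edgeOf h = e) = {o.pick e, X.inv (o.pick e)} := by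
    ext h
    simp only [Finset.mem_filter, Finset.mem_univ, true_and, Finset.mem_insert,
      Finset.mem_singleton]
    constructor
    · rintro rfl
      exact pick_cases o h
    · rintro (rfl | rfl)
      · exact o.pick_spec e
      · rw [X.edgeOf_inv, o.pick_spec]
  rw [this, Finset.sum_pair (X.inv_ne _).symm]

lemma walk_append {S : Finset X.Edge} {u v w : X.V} {l m : List X.H} (h1 : X.Walk S u l v)
    (h2 : X.Walk S v m w) : X.Walk S u (l ++ m) w := by
  induction l generalizing u with
  | nil => cases h1; exact h2
  | cons h l ih => exact ⟨h1.1, h1.2.1, ih h1.2.2⟩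

lemma walk_append_iff {S : Finset X.Edge} {u w : X.V} {l m : List X.H} :
    X.Walk S u (l ++ m) w ↔ ∃ v, X.Walk S u l v ∧ X.Walk S v m w := by
  induction l generalizing u with
  | nil => simp [Walk]
  | cons h l ih => simp [Walk, ih, and_assoc]

lemma walk_reverse {S : Finset X.Edge} {u v : X.V} {l : List X.H} (h1 : X.Walk S u l v) :
    X.Walk S v (l.reverse.map X.inv) u := by
  induction l generalizing u with
  | nil => cases h1; rfl
  | cons h l ih =>
    rw [List.reverse_cons, List.map_append]
    refine walk_append (ih h1.2.2) ⟨rfl, ?_, ?_⟩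
    · rw [X.edgeOf_inv]; exact h1.2.1
    · change X.root _ = u
      rw [X.inv_inv]; exact h1.1

lemma walk_mono {S T : Finset X.Edge} {u v : X.V} {l : List X.H} (h : X.Walk S u l v)
    (hT : ∀ k ∈ l, X.edgeOf k ∈ T) : X.Walk T u l v := by
  induction l generalizing u with
  | nil => exact h
  | cons k l ih => exact ⟨h.1, hT k (by simp), ih h.2.2 fun j hj => hT j (by simp [hj])⟩

lemma walk_mem {S : Finset X.Edge} {u v : X.V} {l : List X.H} (h : X.Walk S u l v) :
    ∀ k ∈ l, X.edgeOf k ∈ S := by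
  induction l generalizing u with
  | nil => simp
  | cons k l ih =>
    intro j hj
    rcases List.mem_cons.1 hj with rfl | hj
    · exact h.2.1
    · exact ih h.2.2 j hj

lemma Reach.refl {S : Finset X.Edge} (u : X.V) : X.Reach S u u := ⟨[], rfl⟩
lemma Reach.symm {S : Finset X.Edge} {u v : X.V} (h : X.Reach S u v) : X.Reach S v u :=
  ⟨_, walk_reverse h.choose_spec⟩
lemma Reach.trans {S : Finset X.Edge} {u v w : X.V} (h : X.Reach S u v) (k : X.Reach S v w) :
    X.Reach S u w := ⟨_, walk_append h.choose_spec k.choose_spec⟩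
lemma Reach.step {S : Finset X.Edge} {h : X.H} (hh : X.edgeOf h ∈ S) :
    X.Reach S (X.root h) (X.root (X.inv h)) := ⟨[h], rfl, hh, rfl⟩

lemma Reach.of_steps {S T : Finset X.Edge}
    (hs : ∀ h, X.edgeOf h ∈ S → X.Reach T (X.root h) (X.root (X.inv h))) {u v : X.V}
    (h : X.Reach S u v) : X.Reach T u v := by
  obtain ⟨l, hl⟩ := h
  induction l generalizing u with
  | nil => cases hl; exact Reach.refl _
  | cons k l ih => rw [← hl.1]; exact (hs k hl.2.1).trans (ih hl.2.2)

lemma reach_iff_reflTransGen {S : Finset X.Edge} {u v : X.V} :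
    Relation.ReflTransGen
      (fun a b => ∃ h, X.root h = a ∧ X.root (X.inv h) = b ∧ X.edgeOf h ∈ S) u v ↔
      X.Reach S u v := by
  constructor
  · intro h
    induction h with
    | refl => exact Reach.refl _
    | tail _ h2 ih =>
      obtain ⟨h, rfl, rfl, hS⟩ := h2
      exact ih.trans (Reach.step hS)
  · rintro ⟨l, hl⟩
    induction l generalizing u with
    | nil => cases hl; exact Relation.ReflTransGen.refl
    | cons k l ih => exact Relation.ReflTransGen.head ⟨k, hl.1, rfl, hl.2.1⟩ (ih hl.2.2)

lemma compRel_iff {F : Finset X.Edge} {u v : X.V} : X.compRel F u v ↔ X.Reach Fᶜ u v := by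
  rw [← reach_iff_reflTransGen]
  unfold compRel
  have : X.adjStep F =
      (fun a b => ∃ h, X.root h = a ∧ X.root (X.inv h) = b ∧ X.edgeOf h ∈ Fᶜ) := by
    funext a b
    simp [adjStep]
  rw [this]

/-- A walk can be shortened to one without repeated edges. -/
lemma exists_trail {S : Finset X.Edge} {u v : X.V} {l : List X.H} (h : X.Walk S u l v) :
    ∃ l', X.Walk S u l' v ∧ (l'.map X.edgeOf).Nodup := by
  induction l generalizing u with
  | nil => exact ⟨[], h, by simp⟩
  | cons k l ih =>
    obtain ⟨m, hm, hnd⟩ := ih h.2.2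
    by_cases hk : X.edgeOf k ∈ m.map X.edgeOf
    · obtain ⟨k', hk', he⟩ := List.mem_map.1 hk
      obtain ⟨A, B, rfl⟩ := List.append_of_mem hk'
      obtain ⟨w, h1, h2⟩ := walk_append_iff.1 hm
      rw [List.map_append] at hnd
      have hnd2 := hnd.of_append_right
      rcases edgeOf_eq he with rfl | rfl
      · exact ⟨k' :: B, ⟨h.1, h.2.1, h2.2.2⟩, hnd2⟩
      · refine ⟨B, ?_, ?_⟩
        · have := h2.2.2
          rw [X.inv_inv, h.1] at this
          exact this
        · rw [List.map_cons] at hnd2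
          exact hnd2.of_cons
    · exact ⟨k :: m, ⟨h.1, h.2.1, hm⟩, by simpa [hk] using hnd⟩

lemma chain_walk {S : Finset X.Edge} (h k : X.H) (l : List X.H) :
    (List.IsChain (fun a b => X.root (X.inv a) = X.root b) (h :: (l ++ [k])) ∧
      ∀ j ∈ l, X.edgeOf j ∈ S) ↔ X.Walk S (X.root (X.inv h)) l (X.root k) := by
  induction l generalizing h with
  | nil => simp [Walk]
  | cons a l ih =>
    rw [List.cons_append, List.isChain_cons_cons]
    simp only [Walk, ← ih a, List.forall_mem_cons]
    constructor
    · rintro ⟨⟨h1, h2⟩, h3, h4⟩; exact ⟨h1.symm, h3, h2, h4⟩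
    · rintro ⟨h1, h3, h2, h4⟩; exact ⟨⟨h1.symm, h2⟩, h3, h4⟩

/-- A closed path with edges in `S` is the same as a nonempty closed walk in `S`. -/
lemma closedPath_cons {S : Finset X.Edge} (h : X.H) (l : List X.H) :
    (X.IsClosedPath (h :: l) ∧ ∀ j ∈ h :: l, X.edgeOf j ∈ S) ↔
      X.edgeOf h ∈ S ∧ X.Walk S (X.root (X.inv h)) l (X.root h) := by
  rw [← chain_walk]
  simp only [IsClosedPath, List.forall_mem_cons, List.take_succ_cons, List.take_zero,
    List.cons_append]
  constructor
  · rintro ⟨⟨_, h1⟩, h2, h3⟩; exact ⟨h2, h1, h3⟩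
  · rintro ⟨h2, h1, h3⟩; exact ⟨⟨by simp, h1⟩, h2, h3⟩

/-- Removing the first edge of an edge cycle does not affect reachability. -/
lemma reach_erase {S : Finset X.Edge} {h : X.H} {l : List X.H}
    (hc : X.IsEdgeCycle S (h :: l)) {u v : X.V} (huv : X.Reach S u v) :
    X.Reach (S.erase (X.edgeOf h)) u v := by
  have hw := ((closedPath_cons (S := S) h l).1 ⟨hc.1, hc.2.1⟩).2
  have hnd := hc.2.2
  rw [List.map_cons, List.nodup_cons] at hnd
  have hw' : X.Reach (S.erase (X.edgeOf h)) (X.root (X.inv h)) (X.root h) := by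
    refine ⟨l, walk_mono hw fun k hk => Finset.mem_erase.2 ⟨?_, walk_mem hw k hk⟩⟩
    intro heq
    exact hnd.1 (heq ▸ List.mem_map_of_mem hk)
  refine huv.of_steps fun k hk => ?_
  by_cases he : X.edgeOf k = X.edgeOf h
  · rcases edgeOf_eq he with rfl | rfl
    · exact hw'.symm
    · rw [X.inv_inv]; exact hw'
  · exact Reach.step (Finset.mem_erase.2 ⟨he, hk⟩)

/-- Every vertex of a set reachable from `r`, other than `r`, has a parent half-edge, leading
to a vertex that is closer to `r`. -/
lemma exists_parent (S : Finset X.Edge) (C : Finset X.V) (r : X.V)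
    (hC : ∀ v ∈ C, X.Reach S v r) :
    ∃ (d : X.V → ℕ) (p : {v // v ∈ C.erase r} → X.H), ∀ v,
      X.root (p v) = v ∧ X.edgeOf (p v) ∈ S ∧ d (X.root (X.inv (p v))) < d v := by
  classical
  let d : X.V → ℕ := fun v => sInf {n | ∃ l, X.Walk S v l r ∧ l.length = n}
  have key : ∀ v ∈ C, v ≠ r → ∃ h : X.H, X.root h = v ∧ X.edgeOf h ∈ S ∧
      d (X.root (X.inv h)) < d v := by
    intro v hv hvr
    have hne : {n | ∃ l, X.Walk S v l r ∧ l.length = n}.Nonempty := by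
      obtain ⟨l, hl⟩ := hC v hv
      exact ⟨_, l, hl, rfl⟩
    obtain ⟨l, hl, hlen⟩ := Nat.sInf_mem hne
    cases l with
    | nil => exact absurd hl hvr
    | cons h l =>
      refine ⟨h, hl.1, hl.2.1, ?_⟩
      have h1 : d (X.root (X.inv h)) ≤ l.length := Nat.sInf_le ⟨l, hl.2.2, rfl⟩
      have h2 : d v = l.length + 1 := by rw [← List.length_cons (a := h), hlen]
      omega
  choose p hp using key
  exact ⟨d, fun v => p v (Finset.mem_of_mem_erase v.2) (Finset.ne_of_mem_erase v.2),
    fun v => hp v _ _⟩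

/-- Distinct vertices have distinct parent edges. -/
lemma parent_injective {C : Finset X.V} {r : X.V} {d : X.V → ℕ}
    {p : {v // v ∈ C.erase r} → X.H} (h1 : ∀ v, X.root (p v) = v)
    (h2 : ∀ v, d (X.root (X.inv (p v))) < d v) :
    Function.Injective (fun v => X.edgeOf (p v)) := by
  intro v w hvw
  rcases edgeOf_eq hvw with h | h
  · ext
    rw [← h1 v, ← h1 w, h]
  · exfalso
    have a1 := h2 v
    have a2 := h2 w
    rw [h, X.inv_inv, h1 w] at a1
    rw [← h, h1 v] at a2
    omega

/-- A connected set of vertices needs at least `|C| - 1` edges. -/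
lemma card_le_of_reach (S : Finset X.Edge) (C : Finset X.V) (r : X.V)
    (hC : ∀ v ∈ C, X.Reach S v r) : C.card ≤ S.card + 1 := by
  obtain ⟨d, p, hp⟩ := exists_parent S C r hC
  have h1 : (C.erase r).card ≤ S.card := by
    rw [← Finset.card_attach]
    exact Finset.card_le_card_of_injOn (fun v => X.edgeOf (p v)) (fun v _ => (hp v).2.1)
      ((parent_injective (fun v => (hp v).1) (fun v => (hp v).2.2)).injOn)
  have := Finset.pred_card_le_card_erase (s := C) (a := r)
  omega

/-- A connected set of vertices with at least as many edges as vertices contains a cycle. -/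
lemma exists_edgeCycle (S : Finset X.Edge) (C : Finset X.V) (r : X.V) (hr : r ∈ C)
    (hC : ∀ v ∈ C, X.Reach S v r) (hS : ∀ h, X.edgeOf h ∈ S → X.root h ∈ C)
    (hcard : C.card ≤ S.card) : ∃ l, X.IsEdgeCycle S l := by
  obtain ⟨d, p, hp⟩ := exists_parent S C r hC
  have hlt : (Finset.univ.image (fun v => X.edgeOf (p v))).card < S.card := by
    refine lt_of_le_of_lt Finset.card_image_le ?_
    rw [Finset.card_univ, Fintype.card_coe]
    exact lt_of_lt_of_le (Finset.card_erase_lt_of_mem hr) hcard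
  obtain ⟨e, heS, he⟩ := Finset.exists_mem_notMem_of_card_lt_card hlt
  obtain ⟨h, rfl⟩ := X.edgeOf_surjective e
  have hreach : ∀ n, ∀ v ∈ C, d v = n → X.Reach (S.erase (X.edgeOf h)) v r := by
    intro n
    induction n using Nat.strong_induction_on with
    | _ n ih =>
      intro v hv hn
      by_cases hvr : v = r
      · rw [hvr]; exact Reach.refl _
      · set w : {v // v ∈ C.erase r} := ⟨v, Finset.mem_erase.2 ⟨hvr, hv⟩⟩
        obtain ⟨h1, h2, h3⟩ := hp w
        have hC' : X.root (X.inv (p w)) ∈ C := hS _ (by rw [X.edgeOf_inv]; exact h2)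
        have hs : X.Reach (S.erase (X.edgeOf h)) (X.root (p w)) (X.root (X.inv (p w))) := by
          refine Reach.step (Finset.mem_erase.2 ⟨?_, h2⟩)
          intro heq
          exact he (Finset.mem_image.2 ⟨w, Finset.mem_univ _, heq⟩)
        rw [h1] at hs
        exact hs.trans (ih _ (hn ▸ h3) _ hC' rfl)
  obtain ⟨l, hl⟩ := (hreach _ _ (hS (X.inv h) (by rw [X.edgeOf_inv]; exact heS)) rfl).trans
    (hreach _ _ (hS h heS) rfl).symm
  obtain ⟨m, hm, hnd⟩ := exists_trail hl
  have hm' : X.Walk S (X.root (X.inv h)) m (X.root h) :=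
    walk_mono hm fun k hk => Finset.mem_of_mem_erase (walk_mem hm k hk)
  obtain ⟨hc1, hc2⟩ := (closedPath_cons h m).2 ⟨heS, hm'⟩
  refine ⟨h :: m, hc1, hc2, ?_⟩
  rw [List.map_cons, List.nodup_cons]
  refine ⟨?_, hnd⟩
  intro hmem
  obtain ⟨k, hk, hke⟩ := List.mem_map.1 hmem
  exact Finset.ne_of_mem_erase (walk_mem hm k hk) hke

end SerreGraph

/-! ### The gain-twisted Laplacian -/

namespace SerreGraph
open scoped ComplexConjugate

variable {X : SerreGraph}

/-- A unitary gain: complex numbers of modulus one on the half-edges, conjugate (that is,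
inverse) to each other on opposite half-edges. -/
def IsGain (X : SerreGraph) (z : X.H → ℂ) : Prop :=
  (∀ h, z h * conj (z h) = 1) ∧ ∀ h, z (X.inv h) = conj (z h)

/-- The total gain of a list of half-edges. -/
def gain (z : X.H → ℂ) (l : List X.H) : ℂ := (l.map z).prod

/-- The gain-twisted boundary of a half-edge, as a vector indexed by vertices. -/
noncomputable def bvec (z : X.H → ℂ) (h : X.H) (v : X.V) : ℂ :=
  (if v = X.root h then 1 else 0) - conj (z h) * (if v = X.root (X.inv h) then 1 else 0)

/-- The twisted incidence matrix. -/
noncomputable def inc (o : X.Orientation) (z : X.H → ℂ) : Matrix X.V X.Edge ℂ :=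
  Matrix.of fun v e => bvec z (o.pick e) v

/-- The twisted Laplacian of the subgraph with edge set `S`. -/
noncomputable def subLap (o : X.Orientation) (z : X.H → ℂ) (S : Finset X.Edge) :
    Matrix X.V X.V ℂ :=
  partialMul (inc o z) (inc o z).conjTranspose S

lemma gain_cons (z : X.H → ℂ) (h : X.H) (l : List X.H) : gain z (h :: l) = z h * gain z l := by
  simp [gain]

lemma gain_append (z : X.H → ℂ) (l m : List X.H) : gain z (l ++ m) = gain z l * gain z m := by
  simp [gain]

variable {z : X.H → ℂ}

lemma gain_reverse (hz : X.IsGain z) (l : List X.H) :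
    gain z (l.reverse.map X.inv) = conj (gain z l) := by
  induction l with
  | nil => simp [gain]
  | cons h l ih =>
    rw [List.reverse_cons, List.map_append, gain_append, ih, gain_cons, map_mul, mul_comm]
    simp [gain, hz.2]

lemma gain_unit (hz : X.IsGain z) (l : List X.H) : gain z l * conj (gain z l) = 1 := by
  induction l with
  | nil => simp [gain]
  | cons h l ih =>
    rw [gain_cons, map_mul, mul_mul_mul_comm, ih, hz.1, mul_one]

/-- Reversing a half-edge changes its twisted boundary by a unit, so that the twisted Laplacian
does not depend on the orientation. -/
lemma bvec_inv (hz : X.IsGain z) (h : X.H) (v : X.V) :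
    bvec z (X.inv h) v = - z h * bvec z h v := by
  unfold bvec
  rw [X.inv_inv, hz.2, Complex.conj_conj]
  have := hz.1 h
  linear_combination (-(if v = X.root (X.inv h) then (1 : ℂ) else 0)) * this

lemma inc_mul (hz : X.IsGain z) (o : X.Orientation) (h : X.H) (u v : X.V) :
    inc o z u (X.edgeOf h) * (inc o z).conjTranspose (X.edgeOf h) v =
      bvec z h u * conj (bvec z h v) := by
  change bvec z (o.pick (X.edgeOf h)) u * conj (bvec z (o.pick (X.edgeOf h)) v) = _
  set k := o.pick (X.edgeOf h) with hk
  rcases pick_cases o h with hh | hh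
  · rw [← hk] at hh; rw [hh]
  · rw [← hk] at hh
    rw [hh, bvec_inv hz, bvec_inv hz, map_mul, map_neg]
    have := hz.1 k
    linear_combination (-(bvec z k u * conj (bvec z k v))) * this

lemma sum_mul_bvec (z : X.H → ℂ) (W : Finset X.V) (x : X.V → ℂ) (hx : ∀ u ∉ W, x u = 0)
    (h : X.H) : ∑ u ∈ W, x u * bvec z h u =
      x (X.root h) - conj (z h) * x (X.root (X.inv h)) := by
  rw [Finset.sum_subset (Finset.subset_univ W) (fun u _ hu => by rw [hx u hu, zero_mul])]
  simp only [bvec, mul_sub, Finset.sum_sub_distrib, mul_ite, mul_one, mul_zero,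
    Finset.sum_ite_eq', Finset.mem_univ, if_true]
  rw [mul_comm]

/-- `x` is a horizontal section of the gain along the edges in `S`. -/
def Par (z : X.H → ℂ) (S : Finset X.Edge) (x : X.V → ℂ) : Prop :=
  ∀ h, X.edgeOf h ∈ S → x (X.root h) = conj (z h) * x (X.root (X.inv h))

lemma Par.walk {S : Finset X.Edge} {x : X.V → ℂ} (hx : Par z S x) {u v : X.V} {l : List X.H}
    (h : X.Walk S u l v) : x u = conj (gain z l) * x v := by
  induction l generalizing u with
  | nil => cases h; simp [gain]
  | cons k l ih =>
    rw [← h.1, hx k h.2.1, ih h.2.2, gain_cons, map_mul, mul_assoc]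

lemma subLap_apply (o : X.Orientation) (S : Finset X.Edge) (u v : X.V) :
    subLap o z S u v = ∑ e ∈ S, bvec z (o.pick e) u * conj (bvec z (o.pick e) v) := rfl

lemma vec_subLap (o : X.Orientation) (S : Finset X.Edge) (W : Finset X.V) (x : X.V → ℂ)
    (v : X.V) : ∑ u ∈ W, x u * subLap o z S u v =
      ∑ e ∈ S, (∑ u ∈ W, x u * bvec z (o.pick e) u) * conj (bvec z (o.pick e) v) := by
  change ∑ u ∈ W, x u * ∑ e ∈ S, bvec z (o.pick e) u * conj (bvec z (o.pick e) v) = _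
  simp only [Finset.mul_sum, Finset.sum_mul]
  rw [Finset.sum_comm]
  simp only [mul_assoc]

lemma par_of_pick (hz : X.IsGain z) (o : X.Orientation) {S : Finset X.Edge} {x : X.V → ℂ}
    (h : ∀ e ∈ S, x (X.root (o.pick e)) = conj (z (o.pick e)) * x (X.root (X.inv (o.pick e)))) :
    Par z S x := by
  intro k hk
  have h1 := h _ hk
  rcases pick_cases o k with hh | hh
  · rw [← hh] at h1; exact h1
  · set j := o.pick (X.edgeOf k)
    rw [hh, X.inv_inv, hz.2, Complex.conj_conj, h1, ← mul_assoc, hz.1, one_mul]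

/-- A principal minor of the twisted Laplacian is nonzero iff there is no nonzero
horizontal section supported on the given vertices. -/
lemma pdet_subLap_ne_zero_iff (hz : X.IsGain z) (o : X.Orientation) (S : Finset X.Edge)
    (W : Finset X.V) : pdet W (subLap o z S) ≠ 0 ↔
      ∀ x : X.V → ℂ, (∀ u ∉ W, x u = 0) → Par z S x → x = 0 := by
  rw [← not_iff_not, not_not]
  unfold pdet
  rw [← Matrix.exists_vecMul_eq_zero_iff]
  push Not
  constructor
  · rintro ⟨y, hy0, hy⟩
    let x : X.V → ℂ := fun v => if h : v ∈ W then y ⟨v, h⟩ else 0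
    have hxW : ∀ u ∉ W, x u = 0 := fun u hu => by simp [x, hu]
    have hxy : ∀ u : W, x u = y u := fun u => by simp [x]
    have hLx : ∀ v ∈ W, ∑ u ∈ W, x u * subLap o z S u v = 0 := by
      intro v hv
      rw [← Finset.sum_coe_sort W (fun u => x u * subLap o z S u v)]
      have := congrFun hy ⟨v, hv⟩
      simp only [Matrix.vecMul, dotProduct, Matrix.submatrix_apply, Pi.zero_apply] at this
      rw [← this]
      refine Finset.sum_congr rfl fun u _ => ?_
      rw [hxy]
    refine ⟨x, hxW, ?_, ?_⟩
    · have h0 : ∑ v ∈ W, (∑ u ∈ W, x u * subLap o z S u v) * conj (x v) = 0 :=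
        Finset.sum_eq_zero fun v hv => by rw [hLx v hv, zero_mul]
      have h1 : ∑ e ∈ S, (Complex.normSq (∑ u ∈ W, x u * bvec z (o.pick e) u) : ℂ) = 0 := by
        rw [← h0]
        simp only [vec_subLap]
        simp only [Finset.sum_mul (s := S)]
        rw [Finset.sum_comm]
        refine Finset.sum_congr rfl fun e _ => ?_
        rw [← Complex.mul_conj, map_sum, Finset.mul_sum]
        refine Finset.sum_congr rfl fun v _ => ?_
        rw [map_mul]; ring
      rw [← Complex.ofReal_sum, Complex.ofReal_eq_zero,
        Finset.sum_eq_zero_iff_of_nonneg (fun _ _ => Complex.normSq_nonneg _)] at h1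
      apply par_of_pick hz o
      intro e he
      have := h1 e he
      rw [Complex.normSq_eq_zero, sum_mul_bvec z W x hxW] at this
      exact sub_eq_zero.1 this
    · intro hx
      apply hy0
      ext u
      rw [← hxy, hx]
      rfl
  · rintro ⟨x, hxW, hpar, hx0⟩
    refine ⟨fun u => x u, ?_, ?_⟩
    · intro h
      apply hx0
      ext u
      by_cases hu : u ∈ W
      · exact congrFun h ⟨u, hu⟩
      · exact hxW u hu
    · ext v
      simp only [Matrix.vecMul, dotProduct, Matrix.submatrix_apply, Pi.zero_apply]
      rw [Finset.sum_coe_sort W (fun u => x u * subLap o z S u v), vec_subLap]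
      refine Finset.sum_eq_zero fun e he => ?_
      rw [sum_mul_bvec z W x hxW, hpar _ (by rw [o.pick_spec]; exact he), sub_self, zero_mul]

/-- The component of `v` carries no horizontal section supported on `W`: it leaves `W`, or
it contains a closed walk of nontrivial gain. -/
def Unbal (z : X.H → ℂ) (S : Finset X.Edge) (W : Finset X.V) (v : X.V) : Prop :=
  (∃ u, X.Reach S v u ∧ u ∉ W) ∨ ∃ u l, X.Reach S v u ∧ X.Walk S u l u ∧ gain z l ≠ 1

/-- A component carries a nonzero horizontal section exactly when transport to a base vertex is
independent of the path, which is the absence of closed walks of nontrivial gain. -/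
lemma pdet_subLap_ne_zero_iff_unbal (hz : X.IsGain z) (o : X.Orientation) (S : Finset X.Edge)
    (W : Finset X.V) : pdet W (subLap o z S) ≠ 0 ↔ ∀ v, Unbal z S W v := by
  classical
  rw [pdet_subLap_ne_zero_iff hz]
  constructor
  · intro hker v
    by_contra hv
    unfold Unbal at hv
    push Not at hv
    obtain ⟨hv1, hv2⟩ := hv
    have huniq : ∀ u l m, X.Reach S v u → X.Walk S u l v → X.Walk S u m v →
        gain z l = gain z m := by
      intro u l m hu hl hm
      have h1 := hv2 u _ hu (walk_append hl (walk_reverse hm))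
      rw [gain_append, gain_reverse hz] at h1
      have h2 := gain_unit hz m
      linear_combination (gain z m) * h1 - (gain z l) * h2
    let x : X.V → ℂ := fun u => if h : X.Reach S u v then conj (gain z h.choose) else 0
    have hx : ∀ u l, X.Walk S u l v → x u = conj (gain z l) := by
      intro u l hl
      have hr : X.Reach S u v := ⟨l, hl⟩
      simp only [x, hr, dif_pos]
      rw [huniq u _ l hr.symm hr.choose_spec hl]
    have hx0 : x = 0 := by
      apply hker
      · intro u hu
        have : ¬ X.Reach S u v := fun h => hu (hv1 u h.symm)
        simp [x, this]
      · intro h hh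
        by_cases hr : X.Reach S (X.root (X.inv h)) v
        · obtain ⟨l, hl⟩ := hr
          rw [hx _ l hl, hx _ (h :: l) ⟨rfl, hh, hl⟩, gain_cons, map_mul]
        · have hr' : ¬ X.Reach S (X.root h) v := fun h' => hr ((Reach.step hh).symm.trans h')
          simp [x, hr, hr']
    have := hx v [] rfl
    rw [hx0] at this
    simp [gain] at this
  · intro hub x hxW hpar
    ext v
    have hprop : ∀ u, X.Reach S v u → x u = 0 → x v = 0 := by
      rintro u ⟨l, hl⟩ hu
      rw [hpar.walk hl, hu, mul_zero]
    rcases hub v with ⟨u, hu, huW⟩ | ⟨u, l, hu, hl, hg⟩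
    · exact hprop u hu (hxW u huW)
    · refine hprop u hu ?_
      have h1 := hpar.walk hl
      have h2 : (1 - conj (gain z l)) * x u = 0 := by linear_combination h1
      rcases mul_eq_zero.1 h2 with h3 | h3
      · exfalso
        apply hg
        have := congrArg conj (sub_eq_zero.1 h3)
        rw [map_one, Complex.conj_conj] at this
        exact this.symm
      · exact h3

/-- A tree rooted at `r` has determinant one: after deleting `r` its incidence matrix is
unitriangular, once the edges are identified with their endpoints farther from `r`. -/
lemma pdet_tree (hz : X.IsGain z) (o : X.Orientation) (S : Finset X.Edge) (C : Finset X.V)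
    (r : X.V) (hr : r ∈ C) (hC : ∀ v ∈ C, X.Reach S v r) (hcard : S.card + 1 = C.card) :
    pdet (C.erase r) (subLap o z S) = 1 := by
  obtain ⟨d, p, hp⟩ := exists_parent S C r hC
  have hinj := parent_injective (fun v => (hp v).1) (fun v => (hp v).2.2)
  have himg : Finset.univ.image (fun v => X.edgeOf (p v)) = S := by
    apply Finset.eq_of_subset_of_card_le
    · intro e he
      obtain ⟨v, -, rfl⟩ := Finset.mem_image.1 he
      exact (hp v).2.1
    · rw [Finset.card_image_of_injective _ hinj, Finset.card_univ, Fintype.card_coe,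
        Finset.card_erase_of_mem hr]
      omega
  let N : Matrix {v // v ∈ C.erase r} {v // v ∈ C.erase r} ℂ :=
    Matrix.of fun u v => bvec z (p v) u
  have hN : ∀ u v : {v // v ∈ C.erase r}, d v ≤ d u → N u v = if u = v then 1 else 0 := by
    intro u v huv
    have h1 : (u : X.V) ≠ X.root (X.inv (p v)) := by
      intro h
      have := (hp v).2.2
      rw [← h] at this
      omega
    change bvec z (p v) u = _
    unfold bvec
    rw [(hp v).1, if_neg h1]
    simp
  have hdetN : N.det = 1 := by
    have htri : Matrix.BlockTriangular N (fun v => d v) := by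
      intro u v huv
      rw [hN u v huv.le, if_neg]
      rintro rfl
      exact lt_irrefl _ huv
    rw [htri.det]
    refine Finset.prod_eq_one fun a _ => ?_
    have : N.toSquareBlock (fun v => d v) a = 1 := by
      ext u v
      change N u v = _
      rw [hN u v (by rw [u.2, v.2]), Matrix.one_apply]
      simp [Subtype.val_inj]
    rw [this, Matrix.det_one]
  have hL : (subLap o z S).submatrix (Subtype.val : {v // v ∈ C.erase r} → X.V) Subtype.val =
      N * N.conjTranspose := by
    ext u v
    rw [Matrix.mul_apply, Matrix.submatrix_apply]
    change ∑ e ∈ S, inc o z u e * (inc o z).conjTranspose e v = _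
    rw [← himg, Finset.sum_image hinj.injOn]
    refine Finset.sum_congr rfl fun w _ => ?_
    rw [inc_mul hz]
    rfl
  unfold pdet
  rw [hL, Matrix.det_mul, Matrix.det_conjTranspose, hdetN]
  simp

end SerreGraph

/-! ### The twisted matrix-tree theorem -/

namespace SerreGraph
open scoped ComplexConjugate

variable {X : SerreGraph} {z : X.H → ℂ}

lemma pdet_subLap_eq_zero_of_card_lt (o : X.Orientation) (S : Finset X.Edge) (W : Finset X.V)
    (h : S.card < W.card) : pdet W (subLap o z S) = 0 := by
  unfold subLap
  rw [cauchyBinet, Finset.powersetCard_eq_empty.2 h, Finset.sum_empty]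

lemma subLap_erase (hz : X.IsGain z) (o : X.Orientation) (S : Finset X.Edge) (h : X.H)
    (hh : X.edgeOf h ∈ S) (u v : X.V) : subLap o z S u v =
      subLap o z (S.erase (X.edgeOf h)) u v + bvec z h u * conj (bvec z h v) := by
  rw [← inc_mul hz o]
  exact (Finset.sum_erase_add _ _ hh).symm

lemma subLap_conj (o : X.Orientation) (S : Finset X.Edge) (u v : X.V) :
    conj (subLap o z S u v) = subLap o z S v u := by
  rw [subLap_apply, subLap_apply, map_sum]
  refine Finset.sum_congr rfl fun e _ => ?_
  rw [map_mul, Complex.conj_conj, mul_comm]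

lemma Par.vec_subLap {S : Finset X.Edge} {x : X.V → ℂ} (hx : Par z S x) (o : X.Orientation)
    (W : Finset X.V) (hW : ∀ u ∉ W, x u = 0) (v : X.V) :
    ∑ u ∈ W, x u * subLap o z S u v = 0 := by
  rw [SerreGraph.vec_subLap]
  refine Finset.sum_eq_zero fun e he => ?_
  rw [sum_mul_bvec z W x hW, hx _ (by rw [o.pick_spec]; exact he), sub_self, zero_mul]

/-- A connected unicyclic graph has determinant `|1 - z(l)|²`, where `l` is its cycle. -/
lemma pdet_unicyclic (hz : X.IsGain z) (o : X.Orientation) (S : Finset X.Edge) (C : Finset X.V)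
    (hC : ∀ u ∈ C, ∀ v ∈ C, X.Reach S u v) (hS : ∀ h, X.edgeOf h ∈ S → X.root h ∈ C)
    (hcard : S.card = C.card) (l : List X.H) (hl : X.IsEdgeCycle S l) :
    pdet C (subLap o z S) = ((‖1 - gain z l‖ ^ 2 : ℝ) : ℂ) := by
  classical
  cases l with
  | nil => exact absurd rfl hl.1.1
  | cons h l =>
  obtain ⟨hhS, hw⟩ := (closedPath_cons (S := S) h l).1 ⟨hl.1, hl.2.1⟩
  have hwS : X.Walk (S.erase (X.edgeOf h)) (X.root (X.inv h)) l (X.root h) := by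
    have hnd := hl.2.2
    rw [List.map_cons, List.nodup_cons] at hnd
    refine walk_mono hw fun k hk => Finset.mem_erase.2 ⟨?_, walk_mem hw k hk⟩
    intro heq
    exact hnd.1 (heq ▸ List.mem_map_of_mem hk)
  set S' := S.erase (X.edgeOf h) with hS'
  set r := X.root h with hr
  have hrC : r ∈ C := hS h hhS
  have hcard' : S'.card + 1 = C.card := by
    rw [hS', Finset.card_erase_add_one hhS, hcard]
  have hreach : ∀ v ∈ C, X.Reach S' v r := fun v hv => reach_erase hl (hC v hv r hrC)
  have htree := pdet_tree hz o S' C r hrC hreach hcard'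
  have hex : ¬ ∀ x : X.V → ℂ, (∀ u ∉ C, x u = 0) → Par z S' x → x = 0 := by
    rw [← pdet_subLap_ne_zero_iff hz o, not_not]
    exact pdet_subLap_eq_zero_of_card_lt o _ _ (by omega)
  push Not at hex
  obtain ⟨x, hxC, hpar, hx0⟩ := hex
  have hxr : x r ≠ 0 := by
    intro h0
    apply hx0
    ext v
    by_cases hv : v ∈ C
    · obtain ⟨m, hm⟩ := hreach v hv
      rw [hpar.walk hm, h0, mul_zero]
      rfl
    · exact hxC v hv
  set y : ℂ := x r - conj (z h) * x (X.root (X.inv h)) with hy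
  have hy' : y = x r * conj (1 - gain z (h :: l)) := by
    rw [hy, hpar.walk hwS, gain_cons, map_sub, map_mul, map_one]; ring
  have hxb : ∑ k ∈ C, x k * bvec z h k = y := sum_mul_bvec z C x hxC h
  have hrowsum : ∀ j, ∑ k ∈ C, x k * subLap o z S k j = y * conj (bvec z h j) := by
    intro j
    simp only [subLap_erase hz o S h hhS, mul_add, Finset.sum_add_distrib]
    rw [hpar.vec_subLap o C hxC, zero_add, ← hxb, Finset.sum_mul]
    simp only [mul_assoc]
  have hcolsum : ∀ i, ∑ k ∈ C, subLap o z S i k * conj (x k) = bvec z h i * conj y := by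
    intro i
    have := congrArg conj (hrowsum i)
    rw [map_sum, map_mul, Complex.conj_conj, mul_comm (conj y)] at this
    rw [← this]
    refine Finset.sum_congr rfl fun k _ => ?_
    rw [map_mul, subLap_conj, mul_comm]
  have hdouble : ∑ k ∈ C, ∑ m ∈ C, x k * subLap o z S k m * conj (x m) = y * conj y := by
    simp only [mul_assoc, ← Finset.mul_sum]
    simp only [hcolsum]
    simp only [← mul_assoc, ← Finset.sum_mul]
    rw [hxb]
  have hcong := pdet_congruence C r hrC (subLap o z S) x (fun k => conj (x k))
  simp only [hdouble, hrowsum, hcolsum] at hcong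
  let A : Matrix X.V X.V ℂ := Matrix.of fun i j => if i = r ∨ j = r then 0 else subLap o z S' i j
  let a : X.V → ℂ := fun i => if i = r then y else bvec z h i
  have h1 := pdet_add_rankOne C r hrC A a (fun i => conj (a i)) (by simp [A]) (by simp [A])
  have h2 : pdet (C.erase r) A = 1 := by
    rw [← htree]
    apply pdet_congr
    intro i hi j hj
    simp [A, Finset.ne_of_mem_erase hi, Finset.ne_of_mem_erase hj]
  have h3 : pdet C (A + Matrix.vecMulVec a (fun i => conj (a i))) =
      x r * conj (x r) * pdet C (subLap o z S) := by
    rw [← hcong]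
    apply pdet_congr
    intro i hi j hj
    simp only [A, a, Matrix.add_apply, Matrix.vecMulVec_apply, Matrix.of_apply]
    by_cases hi' : i = r <;> by_cases hj' : j = r
    · simp [hi', hj']
    · simp [hi', hj']
    · simp [hi', hj']
    · simp only [hi', hj', or_self, if_false]
      rw [subLap_erase hz o S h hhS]
  rw [h3, h2, mul_one] at h1
  simp only [a, if_true] at h1
  have h4 : x r * conj (x r) ≠ 0 := mul_ne_zero hxr (by simpa using hxr)
  apply mul_left_cancel₀ h4
  rw [h1, hy', map_mul, Complex.conj_conj, Complex.ofReal_pow, ← Complex.mul_conj']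
  ring

/-- The weight of the edge set of a component with respect to the gain `z`. -/
noncomputable def compWeight (X : SerreGraph) (z : X.H → ℂ) (S : Finset X.Edge) : ℝ := by
  classical exact
  if hc : ∃ l, X.IsEdgeCycle S l then ‖(1 : ℂ) - gain z hc.choose‖ ^ 2 else 1

lemma mem_compVerts {F : Finset X.Edge} {u v : X.V} :
    u ∈ X.compVerts F v ↔ X.Reach Fᶜ v u := by
  simp [compVerts, compRel_iff]

lemma compVerts_eq_iff {F : Finset X.Edge} {u v : X.V} :
    X.compVerts F u = X.compVerts F v ↔ X.Reach Fᶜ u v := by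
  constructor
  · intro h
    rw [← mem_compVerts, h, mem_compVerts]
    exact Reach.refl _
  · intro h
    ext w
    rw [mem_compVerts, mem_compVerts]
    exact ⟨fun k => h.symm.trans k, fun k => h.trans k⟩

lemma mem_edgesIn {F : Finset X.Edge} {C : Finset X.V} {e : X.Edge} :
    e ∈ X.edgesIn F C ↔ e ∉ F ∧ ∃ h, X.edgeOf h = e ∧ X.root h ∈ C := by
  simp [edgesIn]

lemma mem_edgesIn_compVerts {F : Finset X.Edge} {r : X.V} {h : X.H} :
    X.edgeOf h ∈ X.edgesIn F (X.compVerts F r) ↔ X.edgeOf h ∉ F ∧ X.Reach Fᶜ r (X.root h) := by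
  rw [mem_edgesIn]
  constructor
  · rintro ⟨hF, k, hk, hkr⟩
    refine ⟨hF, ?_⟩
    rw [mem_compVerts] at hkr
    rcases edgeOf_eq hk with rfl | rfl
    · exact hkr
    · refine hkr.trans (Reach.step ?_).symm
      rw [Finset.mem_compl]
      exact hF
  · rintro ⟨hF, hr⟩
    exact ⟨hF, h, rfl, mem_compVerts.2 hr⟩

lemma bvec_eq_zero {h : X.H} {u : X.V} (h1 : u ≠ X.root h) (h2 : u ≠ X.root (X.inv h)) :
    bvec z h u = 0 := by
  simp [bvec, h1, h2]

lemma bvec_ne_zero {h : X.H} {u : X.V} (hb : bvec z h u ≠ 0) :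
    u = X.root h ∨ u = X.root (X.inv h) := by
  by_contra hcon
  push Not at hcon
  exact hb (bvec_eq_zero hcon.1 hcon.2)

lemma reach_edgesIn {F : Finset X.Edge} {r u v : X.V} (hu : X.Reach Fᶜ r u)
    (huv : X.Reach Fᶜ u v) : X.Reach (X.edgesIn F (X.compVerts F r)) u v := by
  obtain ⟨l, hl⟩ := huv
  induction l generalizing u with
  | nil => cases hl; exact Reach.refl _
  | cons h l ih =>
    have h1 : X.edgeOf h ∈ X.edgesIn F (X.compVerts F r) := by
      rw [mem_edgesIn_compVerts, hl.1]
      exact ⟨Finset.mem_compl.1 hl.2.1, hu⟩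
    have h2 := Reach.step h1
    have h3 := Reach.step hl.2.1
    rw [hl.1] at h2 h3
    exact h2.trans (ih (hu.trans h3) hl.2.2)

/-- For an edge set of the right size with no horizontal sections, the determinant is the
product of the weights of the components. -/
lemma pdet_eq_prod_weight (hz : X.IsGain z) (o : X.Orientation) (F : Finset X.Edge)
    (W : Finset X.V) (hub : ∀ v, Unbal z Fᶜ W v) (hcard : Fᶜ.card = W.card) :
    pdet W (subLap o z Fᶜ) =
      ((∏ C ∈ X.components F, compWeight X z (X.edgesIn F C) : ℝ) : ℂ) := by
  classical
  have hne : pdet W (subLap o z Fᶜ) ≠ 0 := (pdet_subLap_ne_zero_iff_unbal hz o _ _).2 hub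
  have hb : ∀ u, X.compVerts F u ∈ X.components F := fun u =>
    Finset.mem_image_of_mem _ (Finset.mem_univ u)
  have hprod := pdet_eq_prod W (X.compVerts F) (subLap o z Fᶜ) (X.components F)
    (fun u _ => hb u) (by
      intro u _ v _ huv
      rw [subLap_apply]
      refine Finset.sum_eq_zero fun e he => ?_
      by_contra hcon
      have h1 := bvec_ne_zero (left_ne_zero_of_mul hcon)
      have h2 : v = _ ∨ v = _ :=
        bvec_ne_zero (fun h0 => right_ne_zero_of_mul hcon (by rw [h0, map_zero]))
      have h3 : X.Reach Fᶜ (X.root (o.pick e)) (X.root (X.inv (o.pick e))) :=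
        Reach.step (by rw [o.pick_spec]; exact he)
      apply huv
      rw [compVerts_eq_iff]
      rcases h1 with rfl | rfl <;> rcases h2 with rfl | rfl
      · exact Reach.refl _
      · exact h3
      · exact h3.symm
      · exact Reach.refl _)
  have hblock : ∀ C ∈ X.components F,
      pdet (W.filter fun u => X.compVerts F u = C) (subLap o z Fᶜ) =
        pdet (W.filter fun u => X.compVerts F u = C) (subLap o z (X.edgesIn F C)) := by
    intro C hC
    obtain ⟨r, -, rfl⟩ := Finset.mem_image.1 hC
    apply pdet_congr
    intro u hu v _
    rw [subLap_apply, subLap_apply]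
    symm
    apply Finset.sum_subset
    · intro e he
      exact Finset.mem_compl.2 (mem_edgesIn.1 he).1
    · intro e he he'
      have hur := (Finset.mem_filter.1 hu).2
      rw [compVerts_eq_iff] at hur
      rw [bvec_eq_zero, zero_mul]
      · intro h
        apply he'
        rw [← o.pick_spec e, mem_edgesIn_compVerts, o.pick_spec, ← h]
        exact ⟨Finset.mem_compl.1 he, hur.symm⟩
      · intro h
        apply he'
        rw [← o.pick_spec e, ← X.edgeOf_inv, mem_edgesIn_compVerts, X.edgeOf_inv, o.pick_spec, ← h]
        exact ⟨Finset.mem_compl.1 he, hur.symm⟩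
  rw [hprod] at hne
  have hle : ∀ C ∈ X.components F,
      (W.filter fun u => X.compVerts F u = C).card ≤ (X.edgesIn F C).card := by
    intro C hC
    by_contra hlt
    apply Finset.prod_ne_zero_iff.1 hne C hC
    rw [hblock C hC]
    exact pdet_subLap_eq_zero_of_card_lt o _ _ (not_le.1 hlt)
  have hW : W.card = ∑ C ∈ X.components F, (W.filter fun u => X.compVerts F u = C).card :=
    Finset.card_eq_sum_card_fiberwise (fun u _ => hb u)
  have hE : Fᶜ.card = ∑ C ∈ X.components F, (X.edgesIn F C).card := by
    rw [Finset.card_eq_sum_card_fiberwise (f := fun e => X.compVerts F (X.root (o.pick e)))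
      (t := X.components F) (fun e _ => hb _)]
    refine Finset.sum_congr rfl fun C hC => ?_
    obtain ⟨r, -, rfl⟩ := Finset.mem_image.1 hC
    congr 1
    ext e
    rw [Finset.mem_filter, Finset.mem_compl, compVerts_eq_iff]
    conv_rhs => rw [← o.pick_spec e, mem_edgesIn_compVerts, o.pick_spec]
    exact and_congr_right fun _ => ⟨Reach.symm, Reach.symm⟩
  have heq := (Finset.sum_eq_sum_iff_of_le hle).1 (by rw [← hW, ← hE, hcard])
  rw [hprod, Complex.ofReal_prod]
  refine Finset.prod_congr rfl fun C hC => ?_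
  rw [hblock C hC]
  have hCeq := heq C hC
  obtain ⟨r, -, rfl⟩ := Finset.mem_image.1 hC
  set C := X.compVerts F r with hCdef
  set S := X.edgesIn F C with hSdef
  have hmem : ∀ v, X.compVerts F v = C ↔ v ∈ C := by
    intro v
    rw [hCdef, compVerts_eq_iff, mem_compVerts]
    exact ⟨Reach.symm, Reach.symm⟩
  have hS : ∀ h, X.edgeOf h ∈ S → X.root h ∈ C := by
    intro h hh
    rw [hSdef, hCdef, mem_edgesIn_compVerts] at hh
    exact mem_compVerts.2 hh.2
  have hconn : ∀ u ∈ C, ∀ v ∈ C, X.Reach S u v := by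
    intro u hu v hv
    rw [hCdef, mem_compVerts] at hu hv
    exact reach_edgesIn hu (hu.symm.trans hv)
  have hrC : r ∈ C := mem_compVerts.2 (Reach.refl _)
  have hsub : (W.filter fun u => X.compVerts F u = C) ⊆ C := by
    intro u hu
    exact (hmem u).1 (Finset.mem_filter.1 hu).2
  by_cases hWC : (W.filter fun u => X.compVerts F u = C) = C
  · rw [hWC] at hCeq ⊢
    have hcyc := exists_edgeCycle S C r hrC (fun v hv => hconn v hv r hrC) hS hCeq.le
    rw [pdet_unicyclic hz o S C hconn hS hCeq.symm _ hcyc.choose_spec]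
    simp only [compWeight, hcyc, dif_pos]
  · obtain ⟨t, htC, htW⟩ := Finset.exists_of_ssubset (Finset.ssubset_iff_subset_ne.2 ⟨hsub, hWC⟩)
    have hge := card_le_of_reach S C t (fun v hv => hconn v hv t htC)
    have hpos : 0 < C.card := Finset.card_pos.2 ⟨t, htC⟩
    have hWe : (W.filter fun u => X.compVerts F u = C) = C.erase t := by
      apply Finset.eq_of_subset_of_card_le
      · intro u hu
        refine Finset.mem_erase.2 ⟨?_, hsub hu⟩
        rintro rfl
        exact htW hu
      · rw [hCeq, Finset.card_erase_of_mem htC]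
        omega
    rw [hWe, Finset.card_erase_of_mem htC] at hCeq
    rw [hWe, pdet_tree hz o S C t htC (fun v hv => hconn v hv t htC) (by omega)]
    have hno : ¬ ∃ l, X.IsEdgeCycle S l := by
      rintro ⟨l, hl⟩
      cases l with
      | nil => exact hl.1.1 rfl
      | cons h l =>
        have h1 := card_le_of_reach _ C t (fun v hv => reach_erase hl (hconn v hv t htC))
        rw [Finset.card_erase_add_one (hl.2.1 h (by simp))] at h1
        omega
    simp only [compWeight, hno, dif_neg, not_false_eq_true, Complex.ofReal_one]

/-- `F` is a basis of the matroid whose independent sets have unbalanced complement. -/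
def IsGainBasis (z : X.H → ℂ) (W : Finset X.V) (F : Finset X.Edge) : Prop :=
  (∀ v, Unbal z Fᶜ W v) ∧ ∀ F', F ⊆ F' → (∀ v, Unbal z F'ᶜ W v) → F' = F

/-- All bases have the same cardinality: by Cauchy–Binet, a nonvanishing minor for the edge set
`Fᶜ` has a nonvanishing term, which comes from `|W|` edges of `Fᶜ`. -/
lemma isGainBasis_iff (hz : X.IsGain z) (o : X.Orientation) (W : Finset X.V)
    (F : Finset X.Edge) :
    IsGainBasis z W F ↔ (∀ v, Unbal z Fᶜ W v) ∧ Fᶜ.card = W.card := by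
  have key : ∀ F : Finset X.Edge, (∀ v, Unbal z Fᶜ W v) → ∃ F', F ⊆ F' ∧
      (∀ v, Unbal z F'ᶜ W v) ∧ F'ᶜ.card = W.card := by
    intro F hF
    have h1 := (pdet_subLap_ne_zero_iff_unbal hz o _ _).2 hF
    unfold subLap at h1
    rw [cauchyBinet] at h1
    obtain ⟨T, hT, hT0⟩ := Finset.exists_ne_zero_of_sum_ne_zero h1
    rw [Finset.mem_powersetCard] at hT
    refine ⟨Tᶜ, ?_, ?_, ?_⟩
    · rw [← compl_compl F]
      exact Finset.compl_subset_compl.2 hT.1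
    · rw [compl_compl]
      exact (pdet_subLap_ne_zero_iff_unbal hz o _ _).1 hT0
    · rw [compl_compl, hT.2]
  constructor
  · rintro ⟨h1, h2⟩
    obtain ⟨F', hF', hu, hc⟩ := key F h1
    rw [← h2 F' hF' hu]
    exact ⟨hu, hc⟩
  · rintro ⟨h1, h2⟩
    refine ⟨h1, fun F' hF' hu => ?_⟩
    obtain ⟨F'', hF'', -, hc⟩ := key F' hu
    symm
    apply Finset.eq_of_subset_of_card_le hF'
    have h3 := Finset.card_le_card hF''
    have h4 := Finset.card_compl_add_card F''
    have h5 := Finset.card_compl_add_card F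
    omega

/-- **Twisted matrix-tree theorem**: a principal minor of the twisted Laplacian is the sum of
the weights of the bases. -/
lemma pdet_univ_subLap (hz : X.IsGain z) (o : X.Orientation) (W : Finset X.V) :
    pdet W (subLap o z Finset.univ) =
      ((∑ F ∈ (Set.toFinite {F : Finset X.Edge | IsGainBasis z W F}).toFinset,
        ∏ C ∈ X.components F, compWeight X z (X.edgesIn F C) : ℝ) : ℂ) := by
  classical
  have h0 : pdet W (subLap o z Finset.univ) =
      ∑ T ∈ Finset.univ.powersetCard W.card, pdet W (subLap o z T) := cauchyBinet W _ _ _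
  rw [h0, Complex.ofReal_sum]
  symm
  apply Finset.sum_bij_ne_zero (fun F _ _ => Fᶜ)
  · intro F hF _
    have := (isGainBasis_iff hz o W F).1 (by simpa using hF)
    rw [Finset.mem_powersetCard]
    exact ⟨Finset.subset_univ _, this.2⟩
  · intro F _ _ F' _ _ h
    exact compl_injective h
  · intro T hT hT0
    rw [Finset.mem_powersetCard] at hT
    have hub := (pdet_subLap_ne_zero_iff_unbal hz o _ _).1 hT0
    have hbas : (∀ v, Unbal z Tᶜᶜ W v) ∧ Tᶜᶜ.card = W.card := by
      rw [compl_compl]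
      exact ⟨hub, hT.2⟩
    refine ⟨Tᶜ, ?_, ?_, compl_compl T⟩
    · simpa using (isGainBasis_iff hz o W Tᶜ).2 hbas
    · rw [← pdet_eq_prod_weight hz o Tᶜ W hbas.1 hbas.2, compl_compl]
      exact hT0
  · intro F hF _
    have := (isGainBasis_iff hz o W F).1 (by simpa using hF)
    exact (pdet_eq_prod_weight hz o F W this.1 this.2).symm

/-- **Kirchhoff's matrix-tree theorem**. -/
lemma pdet_erase_eq_numSpanningTrees (o : X.Orientation) (r : X.V) :
    pdet (Finset.univ.erase r) (subLap o (fun _ => 1) Finset.univ) =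
      (X.numSpanningTrees : ℂ) := by
  classical
  have hz : X.IsGain (fun _ => 1) := ⟨fun _ => by simp, fun _ => by simp⟩
  have hc : (Finset.univ.erase r).card + 1 = Fintype.card X.V := by
    rw [Finset.card_erase_add_one (Finset.mem_univ r), Finset.card_univ]
  have h0 : pdet (Finset.univ.erase r) (subLap o (fun _ => 1) Finset.univ) =
      ∑ T ∈ Finset.univ.powersetCard (Finset.univ.erase r).card,
        pdet (Finset.univ.erase r) (subLap o (fun _ => 1) T) := cauchyBinet _ _ _ _
  have hmem : ∀ T, T ∈ X.spanningTrees ↔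
      (∀ u v, X.Reach T u v) ∧ T.card + 1 = Fintype.card X.V := by
    intro T
    simp [spanningTrees, IsSpanningTree, reach_iff_reflTransGen]
  have hsub : X.spanningTrees ⊆ Finset.univ.powersetCard (Finset.univ.erase r).card := by
    intro T hT
    rw [hmem] at hT
    rw [Finset.mem_powersetCard]
    exact ⟨Finset.subset_univ _, by omega⟩
  rw [h0, ← Finset.sum_subset hsub, numSpanningTrees]
  · rw [Finset.sum_congr rfl (g := fun _ => (1 : ℂ))]
    · simp
    · intro T hT
      rw [hmem] at hT
      exact pdet_tree hz o T Finset.univ r (Finset.mem_univ r) (fun v _ => hT.1 v r)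
        (by rw [hT.2, Finset.card_univ])
  · intro T hT hT'
    by_contra hne
    apply hT'
    rw [hmem]
    rw [Finset.mem_powersetCard] at hT
    refine ⟨?_, by omega⟩
    have hub := (pdet_subLap_ne_zero_iff_unbal hz o _ _).1 hne
    have hr : ∀ v, X.Reach T v r := by
      intro v
      rcases hub v with ⟨u, hu, hur⟩ | ⟨u, l, -, -, hg⟩
      · have : u = r := by simpa using hur
        rw [← this]; exact hu
      · exact absurd (by simp [gain]) hg
    intro u v
    exact (hr u).trans (hr v).symm

end SerreGraph

/-! ### Twisted matroid weights as principal minors -/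

namespace SerreGraph
open scoped ComplexConjugate

variable {X : SerreGraph} {z : X.H → ℂ}

section Character

variable {G : Type} [CommGroup G]

lemma halfVoltage_inv (o : X.Orientation) (η : X.Edge → G) (h : X.H) :
    X.halfVoltage o η (X.inv h) = (X.halfVoltage o η h)⁻¹ := by
  unfold halfVoltage
  rw [X.edgeOf_inv]
  have hne := X.inv_ne h
  rcases pick_cases o h with h1 | h1
  · rw [if_pos h1, if_neg]
    intro h2
    exact hne (h2.trans h1.symm)
  · have h2 : X.inv h = o.pick (X.edgeOf h) := by
      conv_lhs => rw [h1]
      exact X.inv_inv _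
    rw [if_pos h2, if_neg, _root_.inv_inv]
    intro h3
    exact hne (h2.trans h3.symm)

/-- The gain on half-edges obtained from a voltage assignment through a character. -/
noncomputable def charGain (o : X.Orientation) (η : X.Edge → G) (ρ : G →* ℂ) (h : X.H) : ℂ :=
  ρ (X.halfVoltage o η h)

lemma gain_charGain (o : X.Orientation) (η : X.Edge → G) (ρ : G →* ℂ) (l : List X.H) :
    gain (charGain o η ρ) l = ρ (X.pathVoltage o η l) := by
  unfold gain pathVoltage
  rw [map_list_prod, List.map_map]
  rfl

lemma cycleWeight_eq (o : X.Orientation) (η : X.Edge → G) (ρ : G →* ℂ) (S : Finset X.Edge) :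
    cycleWeight X o η ρ S = compWeight X (charGain o η ρ) S := by
  unfold cycleWeight compWeight
  simp only [gain_charGain]

lemma walk_root {S : Finset X.Edge} {u v : X.V} {l : List X.H} (h : X.Walk S u l v) :
    ∀ k ∈ l, X.Reach S u (X.root k) := by
  induction l generalizing u with
  | nil => simp
  | cons k l ih =>
    intro j hj
    rcases List.mem_cons.1 hj with rfl | hj
    · rw [h.1]; exact Reach.refl _
    · rw [← h.1]; exact (Reach.step h.2.1).trans (ih h.2.2 j hj)

variable [Fintype G]

lemma char_mul_conj (ρ : G →* ℂ) (g : G) : ρ g * conj (ρ g) = 1 := by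
  have h1 : ρ g ^ Fintype.card G = 1 := by rw [← map_pow, pow_card_eq_one, map_one]
  rw [Complex.mul_conj', Complex.norm_eq_one_of_pow_eq_one h1 Fintype.card_ne_zero]
  simp

lemma char_inv (ρ : G →* ℂ) (g : G) : ρ g⁻¹ = conj (ρ g) := by
  have h1 : ρ g * ρ g⁻¹ = 1 := by rw [← map_mul, mul_inv_cancel, map_one]
  have h2 := char_mul_conj ρ g
  exact mul_left_cancel₀ (left_ne_zero_of_mul_eq_one h1) (h1.trans h2.symm)

lemma isGain_charGain (o : X.Orientation) (η : X.Edge → G) (ρ : G →* ℂ) :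
    X.IsGain (charGain o η ρ) :=
  ⟨fun _ => char_mul_conj ρ _, fun h => by
    unfold charGain; rw [halfVoltage_inv, char_inv]⟩

variable {Xt : SerreGraph}

/-- The vertices on whose dilation group the character `ρ` is trivial. -/
noncomputable def trivVerts (c : GCover G Xt X) (ρ : G →* ℂ) : Finset X.V := by
  classical exact Finset.univ.filter fun v => ∀ g ∈ c.dilation v, ρ g = 1

lemma mem_trivVerts {c : GCover G Xt X} {ρ : G →* ℂ} {v : X.V} :
    v ∈ trivVerts c ρ ↔ ∀ g ∈ c.dilation v, ρ g = 1 := by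
  simp [trivVerts]

lemma rhoNontrivialAt_iff (c : GCover G Xt X) (o : X.Orientation) (η : X.Edge → G)
    (ρ : G →* ℂ) (F : Finset X.Edge) (v : X.V) :
    c.RhoNontrivialAt o η ρ F v ↔ Unbal (charGain o η ρ) Fᶜ (trivVerts c ρ) v := by
  unfold GCover.RhoNontrivialAt Unbal
  simp only [compRel_iff, mem_trivVerts, gain_charGain]
  push Not
  refine or_congr Iff.rfl ⟨?_, ?_⟩
  · rintro ⟨l, hl, hS, hne⟩
    cases l with
    | nil => exact absurd rfl hl.1
    | cons h l =>
      obtain ⟨h1, h2⟩ := (closedPath_cons (S := Fᶜ) h l).1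
        ⟨hl, fun j hj => Finset.mem_compl.2 (hS j hj).1⟩
      exact ⟨X.root h, h :: l, (hS h (by simp)).2, ⟨rfl, h1, h2⟩, hne⟩
  · rintro ⟨u, l, hr, hw, hne⟩
    cases l with
    | nil => exact absurd (by simp [pathVoltage]) hne
    | cons h l =>
      have hw' := hw
      obtain ⟨rfl, h1, h2⟩ := hw
      obtain ⟨h3, h4⟩ := (closedPath_cons (S := Fᶜ) h l).2 ⟨h1, h2⟩
      exact ⟨h :: l, h3, fun j hj => ⟨Finset.mem_compl.1 (h4 j hj),
        hr.trans (walk_root hw' j hj)⟩, hne⟩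

/-- The weight of the `ρ`-twisted matroid is a principal minor of the `ρ`-twisted Laplacian. -/
lemma twistedWeight_eq (c : GCover G Xt X) (o : X.Orientation) (η : X.Edge → G)
    (ρ : G →* ℂ) : (c.twistedWeight o η ρ : ℂ) =
      pdet (trivVerts c ρ) (subLap o (charGain o η ρ) Finset.univ) := by
  rw [pdet_univ_subLap (isGain_charGain o η ρ)]
  congr 1
  unfold GCover.twistedWeight
  refine Finset.sum_congr ?_ fun F _ => ?_
  · ext F
    simp only [Set.Finite.mem_toFinset, Set.mem_ofPred_eq, GCover.IsBasisRho, IsGainBasis,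
      rhoNontrivialAt_iff]
  · unfold basisWeight
    simp only [cycleWeight_eq]

end Character

lemma subLap_univ_apply (hz : X.IsGain z) (o : X.Orientation) (u v : X.V) :
    subLap o z Finset.univ u v =
      ∑ h, (if X.root h = u then
        ((if u = v then 1 else 0) - z h * (if X.root (X.inv h) = v then 1 else 0)) else 0) := by
  rw [sum_halfEdges o, subLap_apply]
  refine Finset.sum_congr rfl fun e _ => ?_
  have h1 := hz.1 (o.pick e)
  have h2 := hz.2 (o.pick e)
  simp only [bvec, X.inv_inv, h2]
  set s := X.root (o.pick e)
  set t := X.root (X.inv (o.pick e))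
  rw [map_sub, map_mul, Complex.conj_conj]
  simp only [apply_ite conj, map_one, map_zero, eq_comm (a := u) (b := s),
    eq_comm (a := u) (b := t), eq_comm (a := v) (b := s), eq_comm (a := v) (b := t)]
  by_cases hs : s = u <;> by_cases ht : t = u <;> simp only [hs, ht, if_true, if_false]
  · linear_combination (if u = v then (1 : ℂ) else 0) * h1
  · ring
  · linear_combination (if u = v then (1 : ℂ) else 0) * h1
  · ring

lemma isGain_one : X.IsGain (fun _ => 1) := ⟨fun _ => by simp, fun _ => by simp⟩

lemma subLap_one_sum (o : X.Orientation) (u : X.V) :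
    ∑ v, subLap o (fun _ => 1) Finset.univ u v = 0 := by
  simp only [subLap_univ_apply isGain_one]
  rw [Finset.sum_comm]
  refine Finset.sum_eq_zero fun h _ => ?_
  by_cases hu : X.root h = u <;> simp [hu]

lemma subLap_one_sum' (o : X.Orientation) (v : X.V) :
    ∑ u, subLap o (fun _ => 1) Finset.univ u v = 0 := by
  have := congrArg conj (subLap_one_sum o v)
  rw [map_sum, map_zero] at this
  rw [← this]
  exact Finset.sum_congr rfl fun u _ => (subLap_conj o _ _ _).symm

/-- A rank-one perturbation of the Laplacian is proportional to the number of spanning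
trees. -/
lemma pdet_subLap_add_rankOne (o : X.Orientation) (r : X.V) (a b : X.V → ℂ) :
    pdet Finset.univ (subLap o (fun _ => 1) Finset.univ + Matrix.vecMulVec a b) =
      (∑ v, a v) * (∑ v, b v) * (X.numSpanningTrees : ℂ) := by
  set L := subLap o (fun _ => 1) Finset.univ with hL
  have h1 := pdet_congruence Finset.univ r (Finset.mem_univ r) (L + Matrix.vecMulVec a b)
    (fun _ => 1) (fun _ => 1)
  let A : Matrix X.V X.V ℂ := Matrix.of fun i j => if i = r ∨ j = r then 0 else L i j
  have h2 := pdet_add_rankOne Finset.univ r (Finset.mem_univ r) A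
    (fun i => if i = r then ∑ v, a v else a i) (fun i => if i = r then ∑ v, b v else b i)
    (by simp [A]) (by simp [A])
  have h3 : pdet (Finset.univ.erase r) A = (X.numSpanningTrees : ℂ) := by
    rw [← pdet_erase_eq_numSpanningTrees o r]
    apply pdet_congr
    intro i hi j hj
    simp [A, Finset.ne_of_mem_erase hi, Finset.ne_of_mem_erase hj, hL]
  rw [h3] at h2
  simp only [if_true] at h2
  rw [← h2, ← one_mul (pdet _ (L + _)), ← one_mul (1 : ℂ), ← h1]
  apply pdet_congr
  intro i _ j _
  simp only [Matrix.of_apply, Matrix.add_apply, Matrix.vecMulVec_apply, A, one_mul, mul_one,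
    Finset.sum_add_distrib, hL, subLap_one_sum, subLap_one_sum', zero_add,
    ← Finset.mul_sum, ← Finset.sum_mul]
  by_cases hi : i = r <;> by_cases hj : j = r <;> simp [hi, hj]

end SerreGraph

/-! ### Character sums and fibres of the cover -/

namespace SerreGraph
open scoped ComplexConjugate

section CharacterSums

variable {G : Type} [CommGroup G] [Fintype G]

noncomputable instance : Fintype (G →* ℂ) :=
  Fintype.ofEquiv (AddChar (Additive G) ℂ) AddChar.toMonoidHomEquiv

open scoped Classical in
lemma sum_char_apply (x : G) :
    ∑ ρ : G →* ℂ, ρ x = if x = 1 then (Fintype.card G : ℂ) else 0 := by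
  have h := AddChar.sum_apply_eq_ite (Additive.ofMul x)
  have h3 : ∑ ρ : G →* ℂ, ρ x = ∑ ψ : AddChar (Additive G) ℂ, ψ (Additive.ofMul x) :=
    (Equiv.sum_comp (AddChar.toMonoidHomEquiv (A := Additive G) (M := ℂ))
      fun ρ => ρ (Multiplicative.ofAdd (Additive.ofMul x))).symm
  rw [h3, h]
  have h2 : Fintype.card (Additive G) = Fintype.card G := Fintype.card_congr Additive.toMul
  rw [h2]
  exact if_congr (by simp) rfl rfl

open scoped Classical in
lemma sum_char_group (ρ : G →* ℂ) :
    ∑ g : G, ρ g = if ρ = 1 then (Fintype.card G : ℂ) else 0 := by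
  split_ifs with h
  · subst h; simp
  · exact sum_hom_units_eq_zero ρ h

open scoped Classical in
lemma sum_char_subgroup (ρ : G →* ℂ) (D : Subgroup G) :
    ∑ x : D, ρ x = if ∀ g ∈ D, ρ g = 1 then (Nat.card D : ℂ) else 0 := by
  split_ifs with h
  · rw [Finset.sum_congr rfl fun (x : D) _ => h x x.2]
    simp
  · refine sum_hom_units_eq_zero (ρ.comp D.subtype) fun h1 => h fun g hg => ?_
    exact DFunLike.congr_fun h1 (⟨g, hg⟩ : D)

open scoped Classical in
/-- Orthogonality relation for the characters that are trivial on a subgroup. -/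
lemma sum_char_triv (D : Subgroup G) (x : G) :
    (∑ ρ : G →* ℂ, if ∀ g ∈ D, ρ g = 1 then ρ x else 0) * (Nat.card D : ℂ) =
      if x ∈ D then (Fintype.card G : ℂ) else 0 := by
  have h1 : ∀ ρ : G →* ℂ, (if ∀ g ∈ D, ρ g = 1 then ρ x else 0) * (Nat.card D : ℂ) =
      ∑ y : D, ρ (y⁻¹ * x) := by
    intro ρ
    have h2 := sum_char_subgroup ρ D
    rw [← Equiv.sum_comp (Equiv.inv D)] at h2
    simp only [map_mul, ← Finset.sum_mul]
    rw [show (∑ i : D, ρ ((i⁻¹ : D) : G)) = ∑ i : D, ρ ((Equiv.inv D i : D) : G) from rfl, h2]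
    split_ifs <;> ring
  rw [Finset.sum_mul, Finset.sum_congr rfl fun ρ _ => h1 ρ, Finset.sum_comm]
  have h3 : ∀ y : D, ((y⁻¹ : D) : G) * x = 1 ↔ (y : G) = x := fun y => by
    rw [Subgroup.coe_inv, inv_mul_eq_one]
  simp only [sum_char_apply, h3]
  split_ifs with hx
  · rw [Finset.sum_eq_single ⟨x, hx⟩] <;> simp +contextual [Subtype.ext_iff]
  · refine Finset.sum_eq_zero fun y _ => if_neg ?_
    rintro rfl
    exact hx y.2

end CharacterSums

namespace GCover

variable {G : Type} [CommGroup G] [Fintype G] {X Xt : SerreGraph} {c : GCover G Xt X}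
  {σ : X.V → Xt.V}

/-- The dilation subgroup, bundled. -/
def dil (c : GCover G Xt X) (v : X.V) : Subgroup G where
  carrier := c.dilation v
  one_mem' := fun w _ => c.one_smulV w
  mul_mem' := fun {a b} ha hb w hw => by rw [c.mul_smulV, hb w hw, ha w hw]
  inv_mem' := fun {a} ha w hw => by
    conv_lhs => rw [← ha w hw]
    rw [← c.mul_smulV, inv_mul_cancel, c.one_smulV]

lemma mem_dil {v : X.V} {g : G} : g ∈ c.dil v ↔ g ∈ c.dilation v := Iff.rfl

lemma card_dil_pos (c : GCover G Xt X) (v : X.V) : 0 < Nat.card (c.dil v) := Nat.card_pos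

lemma exists_smulV (hσ : ∀ v, c.vMap (σ v) = v) (w : Xt.V) :
    ∃ g, c.smulV g (σ (c.vMap w)) = w := c.vertex_trans _ _ (hσ _)

/-- A group element moving the chosen vertex of the fibre to `w`. -/
noncomputable def pos (hσ : ∀ v, c.vMap (σ v) = v) (w : Xt.V) : G := (exists_smulV hσ w).choose

lemma pos_spec (hσ : ∀ v, c.vMap (σ v) = v) (w : Xt.V) :
    c.smulV (pos hσ w) (σ (c.vMap w)) = w := (exists_smulV hσ w).choose_spec

lemma vMap_smul_sec (hσ : ∀ v, c.vMap (σ v) = v) (g : G) (v : X.V) :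
    c.vMap (c.smulV g (σ v)) = v := by rw [c.vMap_smulV, hσ]

/-- The stabilizer of a single vertex is the dilation group, since `G` is abelian. -/
lemma smul_sec_eq_iff (hσ : ∀ v, c.vMap (σ v) = v) (v : X.V) (g g' : G) :
    c.smulV g (σ v) = c.smulV g' (σ v) ↔ g⁻¹ * g' ∈ c.dil v := by
  constructor
  · intro h w hw
    obtain ⟨k, rfl⟩ := c.vertex_trans (σ v) w (by rw [hσ, hw])
    rw [← c.mul_smulV, mul_comm, c.mul_smulV, c.mul_smulV, ← h, ← c.mul_smulV g⁻¹,
      inv_mul_cancel, c.one_smulV]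
  · intro h
    have h1 := h (σ v) (hσ v)
    conv_lhs => rw [← h1]
    rw [← c.mul_smulV, mul_inv_cancel_left]

open scoped Classical in
/-- The elements moving `σ v` to `w` form a coset of the dilation group. -/
lemma sum_fiber (hσ : ∀ v, c.vMap (σ v) = v) (w : Xt.V) (f : G → ℂ) :
    ∑ g, (if c.smulV g (σ (c.vMap w)) = w then f g else 0) =
      ∑ x : c.dil (c.vMap w), f (pos hσ w * x) := by
  classical
  rw [← Finset.sum_filter]
  symm
  refine Finset.sum_bij (fun x _ => pos hσ w * (x : G)) ?_ ?_ ?_ ?_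
  · intro x _
    rw [Finset.mem_filter]
    refine ⟨Finset.mem_univ _, ?_⟩
    rw [c.mul_smulV, x.2 _ (hσ _), pos_spec]
  · intro x _ y _ h
    exact Subtype.ext (mul_left_cancel h)
  · intro g hg
    rw [Finset.mem_filter] at hg
    refine ⟨⟨(pos hσ w)⁻¹ * g, ?_⟩, Finset.mem_univ _, mul_inv_cancel_left _ _⟩
    rw [← smul_sec_eq_iff hσ, pos_spec, hg.2]
  · intros; rfl

/-- Summation over the orbit of `σ v`. -/
lemma sum_orbit (hσ : ∀ v, c.vMap (σ v) = v) (v : X.V) (f : Xt.V → ℂ) :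
    ∑ g, f (c.smulV g (σ v)) =
      (Nat.card (c.dil v) : ℂ) * ∑ w, (if c.vMap w = v then f w else 0) := by
  classical
  have h1 : ∀ g, f (c.smulV g (σ v)) =
      ∑ w, if c.vMap w = v then (if c.smulV g (σ (c.vMap w)) = w then f w else 0) else 0 := by
    intro g
    rw [Finset.sum_eq_single (c.smulV g (σ v))]
    · simp [vMap_smul_sec hσ]
    · intro w _ hw
      split_ifs with h2 h3
      · subst h2; exact absurd h3.symm hw
      · rfl
      · rfl
    · simp
  rw [Finset.sum_congr rfl fun g _ => h1 g, Finset.sum_comm, Finset.mul_sum]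
  refine Finset.sum_congr rfl fun w _ => ?_
  split_ifs with h
  · subst h
    rw [sum_fiber hσ w fun _ => f w]
    simp
  · simp

lemma card_eq (hσ : ∀ v, c.vMap (σ v) = v) (v : X.V) : (Fintype.card G : ℂ) =
    (Nat.card (c.dil v) : ℂ) * ∑ w, (if c.vMap w = v then 1 else 0) := by
  rw [← sum_orbit hσ v fun _ => 1]
  simp

/-- The local degree is the order of the dilation group. -/
lemma d_eq (hσ : ∀ v, c.vMap (σ v) = v) (w : Xt.V) :
    c.d w = Nat.card (c.dil (c.vMap w)) := by
  have h1 := c.deg_eq (c.vMap w)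
  have h2 : ∀ w' ∈ Finset.univ.filter (fun w' => c.vMap w' = c.vMap w), c.d w' = c.d w := by
    intro w' hw'
    obtain ⟨g, rfl⟩ := c.vertex_trans w w' (Finset.mem_filter.1 hw').2.symm
    exact c.d_smulV g w
  rw [Finset.sum_congr rfl h2, Finset.sum_const, smul_eq_mul] at h1
  have h3 := card_eq hσ (c.vMap w)
  rw [Finset.sum_boole] at h3
  have h4 : Fintype.card G = Nat.card (c.dil (c.vMap w)) *
    (Finset.univ.filter (fun w' => c.vMap w' = c.vMap w)).card := by exact_mod_cast h3
  rw [← h1, mul_comm] at h4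
  exact Nat.eq_of_mul_eq_mul_right (Finset.card_pos.2 ⟨w, by simp⟩) h4

/-- Every half-edge has a lift starting at the chosen vertex and ending where prescribed by
the voltage. -/
lemma exists_lift {o : X.Orientation} {η : X.Edge → G} (hrep : c.IsVoltageRep o σ η) (h : X.H) :
    ∃ ht, c.hMap ht = h ∧ Xt.root ht = σ (X.root h) ∧
      Xt.root (Xt.inv ht) = c.smulV (X.halfVoltage o η h) (σ (X.root (X.inv h))) := by
  obtain ⟨k, h1, h2, h3⟩ := hrep.lift (X.edgeOf h)
  by_cases hp : h = o.pick (X.edgeOf h)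
  · refine ⟨k, ?_⟩
    rw [halfVoltage, if_pos hp]
    rw [← hp] at h1 h2 h3
    exact ⟨h1, h2, h3⟩
  · have hp' := (pick_cases o h).resolve_left hp
    have hp'' : o.pick (X.edgeOf h) = X.inv h := by rw [hp', X.inv_inv, X.edgeOf_inv, o.pick_spec]
    rw [hp''] at h1 h2 h3
    rw [X.inv_inv] at h3
    refine ⟨c.smulH (η (X.edgeOf h))⁻¹ (Xt.inv k), ?_, ?_, ?_⟩
    · rw [c.hMap_smulH, c.hMap_inv, h1, X.inv_inv]
    · rw [c.root_smulH, h3, ← c.mul_smulV, inv_mul_cancel, c.one_smulV]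
    · rw [← c.smulH_inv, Xt.inv_inv, c.root_smulH, h2, halfVoltage, if_neg hp]

/-- The half-edges upstairs are the translates of the chosen lifts, each occurring once. -/
lemma sum_lifts (s : X.H → Xt.H) (hs : ∀ h, c.hMap (s h) = h) (f : Xt.H → ℂ) :
    ∑ k, f k = ∑ h, ∑ g, f (c.smulH g (s h)) := by
  classical
  rw [Finset.sum_sigma']
  symm
  refine Finset.sum_bij (fun p _ => c.smulH p.2 (s p.1)) (fun _ _ => Finset.mem_univ _) ?_ ?_ ?_
  · rintro ⟨h, g⟩ _ ⟨h', g'⟩ _ heq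
    simp only at heq
    have h1 : h = h' := by
      have := congrArg c.hMap heq
      rwa [c.hMap_smulH, c.hMap_smulH, hs, hs] at this
    subst h1
    have h2 : g'⁻¹ * g = 1 := by
      refine c.edge_free _ (s h) (Or.inl ?_)
      rw [c.mul_smulH, heq, ← c.mul_smulH, inv_mul_cancel, c.one_smulH]
    rw [inv_mul_eq_one] at h2
    rw [h2]
  · intro k _
    obtain ⟨g, hg⟩ := c.edge_trans (s (c.hMap k)) k (Or.inl (hs _).symm)
    refine ⟨⟨c.hMap k, g⟩, by simp, ?_⟩
    rcases hg with hg | hg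
    · exact hg
    · have := congrArg c.hMap hg
      rw [c.hMap_smulH, hs, c.hMap_inv] at this
      exact absurd this.symm (X.inv_ne _)
  · intros; rfl

end GCover

end SerreGraph

/-! ### Isotypic functions upstairs -/

namespace SerreGraph
open scoped ComplexConjugate

lemma pdet_map {ι κ R : Type*} [CommRing R] [DecidableEq ι] [DecidableEq κ] (W : Finset κ)
    (f : κ ↪ ι) (A : Matrix ι ι R) : pdet (W.map f) A = pdet W (A.submatrix f f) := by
  unfold pdet
  have hb : Function.Bijective (fun k : W => (⟨f k, Finset.mem_map_of_mem f k.2⟩ : W.map f)) := by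
    refine ⟨fun a b h => Subtype.ext (f.injective (congrArg Subtype.val h)), ?_⟩
    rintro ⟨i, hi⟩
    obtain ⟨k, hk, rfl⟩ := Finset.mem_map.1 hi
    exact ⟨⟨k, hk⟩, rfl⟩
  rw [← Matrix.det_submatrix_equiv_self (Equiv.ofBijective _ hb)]
  rfl

lemma pdet_scale {ι R : Type*} [CommRing R] [DecidableEq ι] (W : Finset ι) (a : ι → R)
    (A : Matrix ι ι R) : pdet W (Matrix.of fun i j => a i * A i j) = (∏ i ∈ W, a i) * pdet W A := by
  unfold pdet
  rw [← Finset.prod_coe_sort, ← Matrix.det_mul_column]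
  rfl

namespace GCover

variable {G : Type} [CommGroup G] [Fintype G] {X Xt : SerreGraph} {c : GCover G Xt X}
  {σ : X.V → Xt.V}

/-- The function on the vertices upstairs that is supported on the fibre of `v`, where it is
given by the character `ρ` after identifying `σ v` with the unit element. It is independent of
the choices in `pos` only when `ρ` is trivial on the dilation group at `v`. -/
noncomputable def isotypic (hσ : ∀ v, c.vMap (σ v) = v) (ρ : G →* ℂ) (v : X.V) (w : Xt.V) : ℂ :=
  if c.vMap w = v then ρ (pos hσ w) else 0

lemma isotypic_smul (hσ : ∀ v, c.vMap (σ v) = v) {ρ : G →* ℂ} {v : X.V}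
    (hv : v ∈ trivVerts c ρ) (g : G) (u : X.V) :
    isotypic hσ ρ v (c.smulV g (σ u)) = if u = v then ρ g else 0 := by
  unfold isotypic
  rw [vMap_smul_sec hσ]
  refine if_ctx_congr Iff.rfl (fun h => ?_) fun _ => rfl
  subst h
  have h1 := pos_spec hσ (c.smulV g (σ u))
  rw [vMap_smul_sec hσ, smul_sec_eq_iff hσ] at h1
  have h2 := mem_trivVerts.1 hv _ h1
  have h3 : g = pos hσ (c.smulV g (σ u)) * ((pos hσ (c.smulV g (σ u)))⁻¹ * g) := by group
  conv_rhs => rw [h3, map_mul, h2, mul_one]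

lemma sum_isotypic (hσ : ∀ v, c.vMap (σ v) = v) {ρ : G →* ℂ} {v : X.V}
    (hv : v ∈ trivVerts c ρ) :
    ∑ w, (c.d w : ℂ) * isotypic hσ ρ v w = ∑ g, ρ g := by
  have h1 := sum_orbit hσ v (isotypic hσ ρ v)
  simp only [isotypic_smul hσ hv, if_true] at h1
  rw [h1, Finset.mul_sum]
  refine Finset.sum_congr rfl fun w _ => ?_
  by_cases h : c.vMap w = v
  · rw [if_pos h, d_eq hσ, h]
  · rw [if_neg h, isotypic, if_neg h]; ring

open scoped Classical in
/-- The Laplacian upstairs acts on the isotypic functions through the twisted Laplacian. At a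
vertex with dilation group `D` each half-edge has `|D|` lifts to a given vertex upstairs; their
contributions add up to a multiple of `|D|` if `ρ` is trivial on `D` and cancel otherwise. -/
lemma subLap_mul_isotypic {o : X.Orientation} {η : X.Edge → G} (hrep : c.IsVoltageRep o σ η)
    (ot : Xt.Orientation) {ρ : G →* ℂ} {v : X.V} (hv : v ∈ trivVerts c ρ) (w : Xt.V) :
    ∑ w', subLap ot (fun _ => 1) Finset.univ w w' * isotypic hrep.sec ρ v w' =
      if c.vMap w ∈ trivVerts c ρ then ρ (pos hrep.sec w) * ((Nat.card (c.dil (c.vMap w)) : ℂ) *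
        subLap o (charGain o η ρ) Finset.univ (c.vMap w) v) else 0 := by
  choose s hs1 hs2 hs3 using exists_lift hrep
  have hσ := hrep.sec
  have h1 : ∑ w', subLap ot (fun _ => 1) Finset.univ w w' * isotypic hσ ρ v w' =
      ∑ k, if Xt.root k = w then isotypic hσ ρ v w - isotypic hσ ρ v (Xt.root (Xt.inv k))
        else 0 := by
    simp only [subLap_univ_apply isGain_one, Finset.sum_mul]
    rw [Finset.sum_comm]
    refine Finset.sum_congr rfl fun k _ => ?_
    split_ifs with h
    · simp [sub_mul, Finset.sum_sub_distrib]
    · simp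
  have h2 : ∀ h : X.H, (∑ g, if Xt.root (c.smulH g (s h)) = w then isotypic hσ ρ v w -
      isotypic hσ ρ v (Xt.root (Xt.inv (c.smulH g (s h)))) else 0) =
      if X.root h = c.vMap w then (Nat.card (c.dil (c.vMap w)) : ℂ) * isotypic hσ ρ v w -
        (if X.root (X.inv h) = v then ρ (pos hσ w) * charGain o η ρ h else 0) *
          (if c.vMap w ∈ trivVerts c ρ then (Nat.card (c.dil (c.vMap w)) : ℂ) else 0)
      else 0 := by
    intro h
    simp only [← c.smulH_inv, c.root_smulH, hs2, hs3, ← c.mul_smulV, isotypic_smul hσ hv]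
    by_cases hr : X.root h = c.vMap w
    · rw [if_pos hr, hr, sum_fiber hσ w, Finset.sum_sub_distrib]
      congr 1
      · simp
      · have h3 := sum_char_subgroup ρ (c.dil (c.vMap w))
        have h4 : (if c.vMap w ∈ trivVerts c ρ then (Nat.card (c.dil (c.vMap w)) : ℂ) else 0) =
            ∑ x : c.dil (c.vMap w), ρ x := by
          rw [h3]
          exact if_congr mem_trivVerts rfl rfl
        rw [h4, Finset.mul_sum]
        refine Finset.sum_congr rfl fun x _ => ?_
        by_cases ht : X.root (X.inv h) = v
        · simp only [ht, if_true, map_mul, charGain]; ring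
        · simp [ht]
    · rw [if_neg hr]
      refine Finset.sum_eq_zero fun g _ => if_neg ?_
      intro hg
      apply hr
      rw [← hg, vMap_smul_sec hσ]
  rw [h1, sum_lifts s hs1, Finset.sum_congr rfl fun h _ => h2 h,
    subLap_univ_apply (isGain_charGain o η ρ)]
  by_cases hw : c.vMap w ∈ trivVerts c ρ
  · simp only [if_pos hw]
    rw [Finset.mul_sum, Finset.mul_sum]
    refine Finset.sum_congr rfl fun h _ => ?_
    unfold isotypic
    split_ifs <;> ring
  · have hwv : c.vMap w ≠ v := fun h => hw (h ▸ hv)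
    simp only [if_neg hw]
    refine Finset.sum_eq_zero fun h _ => ?_
    simp [isotypic, hwv]

open scoped Classical in
/-- Pairs of a character and a vertex on whose dilation group it is trivial: these index a
basis of the functions on the vertices upstairs. -/
noncomputable def pairs (c : GCover G Xt X) : Finset ((G →* ℂ) × X.V) :=
  Finset.univ.filter fun p => p.2 ∈ trivVerts c p.1

lemma mem_pairs {p : (G →* ℂ) × X.V} : p ∈ pairs c ↔ p.2 ∈ trivVerts c p.1 := by
  simp [pairs]

open scoped Classical in
lemma sum_pairs (c : GCover G Xt X) (f : (G →* ℂ) → X.V → ℂ) : ∑ p : pairs c, f p.1.1 p.1.2 =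
    ∑ ρ, ∑ v, if v ∈ trivVerts c ρ then f ρ v else 0 := by
  rw [Finset.sum_coe_sort (pairs c) fun p => f p.1 p.2, pairs, Finset.sum_filter,
    ← Finset.univ_product_univ, Finset.sum_product]

/-- The matrix whose columns are the isotypic functions. -/
noncomputable def pmat (hσ : ∀ v, c.vMap (σ v) = v) : Matrix Xt.V (pairs c) ℂ :=
  Matrix.of fun w p => isotypic hσ p.1.1 p.1.2 w

/-- The inverse of `pmat`. -/
noncomputable def qmat (hσ : ∀ v, c.vMap (σ v) = v) : Matrix (pairs c) Xt.V ℂ :=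
  Matrix.of fun p w => (Nat.card (c.dil p.1.2) : ℂ) / Fintype.card G *
    conj (isotypic hσ p.1.1 p.1.2 w)

lemma card_ne_zero' : (Fintype.card G : ℂ) ≠ 0 := Nat.cast_ne_zero.2 Fintype.card_ne_zero

lemma pmat_mul_qmat (hσ : ∀ v, c.vMap (σ v) = v) : pmat hσ * qmat hσ = 1 := by
  classical
  ext w w'
  rw [Matrix.mul_apply]
  simp only [pmat, qmat, Matrix.of_apply]
  rw [sum_pairs c fun ρ v => isotypic hσ ρ v w * ((Nat.card (c.dil v) : ℂ) / Fintype.card G *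
    conj (isotypic hσ ρ v w'))]
  by_cases hv : c.vMap w' = c.vMap w
  · have h1 : ∀ ρ : G →* ℂ, (∑ v, if v ∈ trivVerts c ρ then isotypic hσ ρ v w *
        ((Nat.card (c.dil v) : ℂ) / Fintype.card G * conj (isotypic hσ ρ v w')) else 0) =
        (if ∀ g ∈ c.dil (c.vMap w), ρ g = 1 then ρ ((pos hσ w')⁻¹ * pos hσ w) else 0) *
          (Nat.card (c.dil (c.vMap w)) : ℂ) / Fintype.card G := by
      intro ρ
      rw [Finset.sum_eq_single (c.vMap w)]
      · simp only [isotypic, hv, if_true, map_mul, char_inv]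
        have hm : c.vMap w ∈ trivVerts c ρ ↔ ∀ g ∈ c.dil (c.vMap w), ρ g = 1 := mem_trivVerts
        by_cases hw : c.vMap w ∈ trivVerts c ρ
        · rw [if_pos hw, if_pos (hm.1 hw)]; ring
        · rw [if_neg hw, if_neg (fun h => hw (hm.2 h))]; ring
      · intro v _ hne
        rw [isotypic, if_neg (Ne.symm hne)]
        simp
      · simp
    rw [Finset.sum_congr rfl fun ρ _ => h1 ρ, ← Finset.sum_div, ← Finset.sum_mul, sum_char_triv,
      Matrix.one_apply]
    have h2 := smul_sec_eq_iff hσ (c.vMap w) (pos hσ w') (pos hσ w)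
    rw [pos_spec] at h2
    have h3 := pos_spec hσ w'
    rw [hv] at h3
    rw [h3] at h2
    by_cases hw : w = w'
    · rw [if_pos hw, if_pos (h2.1 hw.symm), div_self card_ne_zero']
    · rw [if_neg hw, if_neg (fun h => hw (h2.2 h).symm), zero_div]
  · rw [Matrix.one_apply, if_neg (by rintro rfl; exact hv rfl)]
    refine Finset.sum_eq_zero fun ρ _ => Finset.sum_eq_zero fun v _ => ?_
    unfold isotypic
    split_ifs with h1 h2 h3
    · exact absurd (h3.trans h2.symm) hv
    · simp
    · simp
    · simp
    · rfl

lemma qmat_mul_pmat (hσ : ∀ v, c.vMap (σ v) = v) : qmat hσ * pmat hσ = 1 := by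
  classical
  ext p q
  obtain ⟨⟨ρ, v⟩, hp⟩ := p
  obtain ⟨⟨χ, u⟩, hq⟩ := q
  rw [mem_pairs] at hp hq
  rw [Matrix.mul_apply]
  simp only [pmat, qmat, Matrix.of_apply]
  simp only at hp hq
  by_cases huv : u = v
  · subst huv
    have h1 := sum_orbit hσ u fun w => conj (isotypic hσ ρ u w) * isotypic hσ χ u w
    simp only [isotypic_smul hσ hp, isotypic_smul hσ hq, if_true, ← char_inv] at h1
    have h2 := sum_char_group (ρ.comp invMonoidHom * χ)
    have h3 : ρ.comp invMonoidHom * χ = 1 ↔ ρ = χ := by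
      have h5 : ∀ g, ρ g * ρ g⁻¹ = 1 := fun g => by rw [← map_mul, mul_inv_cancel, map_one]
      constructor
      · intro h
        ext g
        have h4 : ρ g⁻¹ * χ g = 1 := DFunLike.congr_fun h g
        exact mul_left_cancel₀ (right_ne_zero_of_mul_eq_one (h5 g))
          (((mul_comm _ _).trans (h5 g)).trans h4.symm)
      · rintro rfl
        ext g
        exact (mul_comm _ _).trans (h5 g)
    have h4 : ∑ g, (ρ.comp invMonoidHom * χ) g = ∑ g, ρ g⁻¹ * χ g := rfl
    rw [h4, h1] at h2
    have h5 : ∀ w, (Nat.card (c.dil u) : ℂ) / Fintype.card G * conj (isotypic hσ ρ u w) *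
        isotypic hσ χ u w = (Nat.card (c.dil u) : ℂ) * (if c.vMap w = u then
          conj (isotypic hσ ρ u w) * isotypic hσ χ u w else 0) / Fintype.card G := by
      intro w
      unfold isotypic
      split_ifs <;> ring
    rw [Finset.sum_congr rfl fun w _ => h5 w, ← Finset.sum_div, ← Finset.mul_sum, h2,
      Matrix.one_apply]
    by_cases hρ : ρ = χ
    · subst hρ
      rw [if_pos (h3.2 rfl), if_pos rfl, div_self card_ne_zero']
    · rw [if_neg (fun h => hρ (h3.1 h)), if_neg (by simp [hρ]), zero_div]
  · rw [Matrix.one_apply, if_neg (by simp [Ne.symm huv])]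
    refine Finset.sum_eq_zero fun w _ => ?_
    unfold isotypic
    split_ifs with h2 h3
    · exact absurd (h3.symm.trans h2) huv
    · simp
    · simp
    · simp

end GCover

end SerreGraph

/-! ### Comparison of determinants -/

namespace SerreGraph
open scoped ComplexConjugate

namespace GCover

variable {G : Type} [CommGroup G] [Fintype G] {X Xt : SerreGraph} {c : GCover G Xt X}
  {σ : X.V → Xt.V} {o : X.Orientation} {η : X.Edge → G}

open scoped Classical in
/-- The block-diagonal matrix, with one block per character, of the perturbed Laplacian
upstairs in the basis of isotypic functions. -/
noncomputable def blockMatrix (c : GCover G Xt X) (o : X.Orientation) (η : X.Edge → G) :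
    Matrix ((G →* ℂ) × X.V) ((G →* ℂ) × X.V) ℂ :=
  Matrix.of fun p q => if p.1 = q.1 then (Nat.card (c.dil p.2) : ℂ) *
    (subLap o (charGain o η p.1) Finset.univ p.2 q.2 +
      if p.1 = 1 then (Fintype.card G : ℂ) else 0) else 0

lemma mem_trivVerts_one (v : X.V) : v ∈ trivVerts c 1 := mem_trivVerts.2 fun _ _ => rfl

/-- The Laplacian upstairs plus the rank-one matrix of the local degrees; unlike the Laplacian
it is invertible when the graph is connected. -/
noncomputable def perturbedLap (c : GCover G Xt X) (ot : Xt.Orientation) : Matrix Xt.V Xt.V ℂ :=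
  subLap ot (fun _ => 1) Finset.univ + Matrix.vecMulVec (fun w => (c.d w : ℂ))
    (fun w => (c.d w : ℂ))

open scoped Classical in
/-- The columns of `pmat` block-diagonalize the perturbed Laplacian; the rank-one term only
affects the block of the trivial character. -/
lemma laplacian_mul_pmat (hrep : c.IsVoltageRep o σ η) (ot : Xt.Orientation) :
    perturbedLap c ot * pmat hrep.sec =
    pmat hrep.sec * ((blockMatrix c o η).submatrix Subtype.val Subtype.val :
      Matrix (pairs c) (pairs c) ℂ) := by
  ext w q
  obtain ⟨⟨χ, v⟩, hq⟩ := q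
  have hv : v ∈ trivVerts c χ := mem_pairs.1 hq
  rw [Matrix.mul_apply, Matrix.mul_apply]
  have hL : ∑ j, perturbedLap c ot w j * pmat hrep.sec j ⟨(χ, v), hq⟩ =
      (if c.vMap w ∈ trivVerts c χ then χ (pos hrep.sec w) * ((Nat.card (c.dil (c.vMap w)) : ℂ) *
        subLap o (charGain o η χ) Finset.univ (c.vMap w) v) else 0) +
      (c.d w : ℂ) * if χ = 1 then (Fintype.card G : ℂ) else 0 := by
    rw [← subLap_mul_isotypic hrep ot hv w, ← sum_char_group χ, ← sum_isotypic hrep.sec hv,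
      Finset.mul_sum, ← Finset.sum_add_distrib]
    refine Finset.sum_congr rfl fun j _ => ?_
    simp only [perturbedLap, pmat, Matrix.of_apply, Matrix.add_apply, Matrix.vecMulVec_apply]
    ring
  rw [hL]
  simp only [pmat, Matrix.of_apply, Matrix.submatrix_apply, blockMatrix]
  rw [sum_pairs c fun ρ u => isotypic hrep.sec ρ u w * (if ρ = χ then (Nat.card (c.dil u) : ℂ) *
    (subLap o (charGain o η ρ) Finset.univ u v +
      if ρ = 1 then (Fintype.card G : ℂ) else 0) else 0)]
  rw [Finset.sum_eq_single χ, Finset.sum_eq_single (c.vMap w)]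
  · rw [if_pos rfl, isotypic, if_pos rfl, d_eq hrep.sec]
    by_cases h1 : χ = 1
    · subst h1
      rw [if_pos (mem_trivVerts_one _), if_pos (mem_trivVerts_one _), if_pos rfl]
      simp only [MonoidHom.one_apply]
      ring
    · simp only [if_neg h1]
      split_ifs <;> ring
  · intro u _ hu
    rw [isotypic, if_neg (Ne.symm hu)]
    simp
  · simp
  · intro ρ _ hρ
    simp [hρ]
  · simp

open scoped Classical in
lemma det_laplacian (hrep : c.IsVoltageRep o σ η) (ot : Xt.Orientation) :
    (perturbedLap c ot).det = pdet (pairs c) (blockMatrix c o η) := by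
  have h := laplacian_mul_pmat hrep ot
  have h1 : perturbedLap c ot = pmat hrep.sec *
        ((blockMatrix c o η).submatrix Subtype.val Subtype.val :
          Matrix (pairs c) (pairs c) ℂ) * qmat hrep.sec := by
    rw [← h, Matrix.mul_assoc, pmat_mul_qmat, Matrix.mul_one]
  rw [h1, Matrix.det_conj_of_mul_eq_one (pmat_mul_qmat _) (qmat_mul_pmat _)]
  rfl

open scoped Classical in
/-- The determinant of the block of a single character. -/
lemma pdet_block (c : GCover G Xt X) (o : X.Orientation) (η : X.Edge → G) (ρ : G →* ℂ) :
    pdet ((pairs c).filter (Prod.fst · = ρ)) (blockMatrix c o η) =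
      (∏ v ∈ trivVerts c ρ, (Nat.card (c.dil v) : ℂ)) *
        pdet (trivVerts c ρ) (Matrix.of fun u v => subLap o (charGain o η ρ) Finset.univ u v +
          if ρ = 1 then (Fintype.card G : ℂ) else 0) := by
  have h1 : (pairs c).filter (Prod.fst · = ρ) =
      (trivVerts c ρ).map (Function.Embedding.sectR ρ X.V) := by
    ext ⟨χ, v⟩
    simp only [Finset.mem_filter, mem_pairs, Finset.mem_map, Function.Embedding.sectR_apply,
      Prod.mk.injEq]
    constructor
    · rintro ⟨h, rfl⟩
      exact ⟨v, h, rfl, rfl⟩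
    · rintro ⟨_, h, rfl, rfl⟩
      exact ⟨h, rfl⟩
  rw [h1, pdet_map, ← pdet_scale]
  congr 1
  ext u v
  simp [blockMatrix]

/-- The determinant of the block of the trivial character counts spanning trees of `X`. -/
lemma pdet_block_one (c : GCover G Xt X) (o : X.Orientation) (η : X.Edge → G) (r : X.V) :
    pdet (trivVerts c 1) (Matrix.of fun u v => subLap o (charGain o η 1) Finset.univ u v +
          if (1 : G →* ℂ) = 1 then (Fintype.card G : ℂ) else 0) =
      (Fintype.card G : ℂ) * (Fintype.card X.V : ℂ) ^ 2 * X.numSpanningTrees := by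
  have h1 : trivVerts c 1 = Finset.univ := Finset.eq_univ_iff_forall.2 mem_trivVerts_one
  have h2 := pdet_subLap_add_rankOne o r (fun _ => (Fintype.card G : ℂ)) fun _ => 1
  have h3 : (Matrix.of fun u v => subLap o (charGain o η 1) Finset.univ u v +
      if (1 : G →* ℂ) = 1 then (Fintype.card G : ℂ) else 0) =
      subLap o (fun _ => 1) Finset.univ +
        Matrix.vecMulVec (fun _ => (Fintype.card G : ℂ)) fun _ => 1 := by
    ext u v
    have h4 : charGain o η (1 : G →* ℂ) = fun _ => 1 := rfl
    simp [h4, Matrix.vecMulVec_apply]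
  rw [h1, h3, h2]
  simp only [Finset.sum_const, Finset.card_univ, nsmul_eq_mul, mul_one]
  ring

open scoped Classical in
/-- The number of characters trivial on the dilation group at `v` is its index. -/
lemma card_char_triv (c : GCover G Xt X) (v : X.V) :
    (Finset.univ.filter fun ρ : G →* ℂ => v ∈ trivVerts c ρ).card =
      Fintype.card G / Nat.card (c.dil v) := by
  have h := sum_char_triv (c.dil v) 1
  rw [if_pos (one_mem _)] at h
  have h1 : (∑ ρ : G →* ℂ, if ∀ g ∈ c.dil v, ρ g = 1 then ρ 1 else 0) =
      ((Finset.univ.filter fun ρ : G →* ℂ => v ∈ trivVerts c ρ).card : ℂ) := by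
    rw [← Finset.sum_boole]
    refine Finset.sum_congr rfl fun ρ _ => ?_
    rw [map_one]
    exact if_congr mem_trivVerts.symm rfl rfl
  rw [h1] at h
  have h2 : (Finset.univ.filter fun ρ : G →* ℂ => v ∈ trivVerts c ρ).card *
    Nat.card (c.dil v) = Fintype.card G := by exact_mod_cast h
  exact (Nat.div_eq_of_eq_mul_left (card_dil_pos c v) h2.symm).symm

open scoped Classical in
lemma prod_dil (c : GCover G Xt X) :
    ∏ ρ : G →* ℂ, ∏ v ∈ trivVerts c ρ, (Nat.card (c.dil v) : ℂ) =
      ∏ v, (Nat.card (c.dil v) : ℂ) ^ (Fintype.card G / Nat.card (c.dil v)) := by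
  have h1 : ∀ ρ : G →* ℂ, ∏ v ∈ trivVerts c ρ, (Nat.card (c.dil v) : ℂ) =
      ∏ v, if v ∈ trivVerts c ρ then (Nat.card (c.dil v) : ℂ) else 1 := by
    intro ρ
    rw [Finset.prod_ite_mem, Finset.univ_inter]
  rw [Finset.prod_congr rfl fun ρ _ => h1 ρ, Finset.prod_comm]
  refine Finset.prod_congr rfl fun v _ => ?_
  rw [← card_char_triv, ← Finset.prod_filter, Finset.prod_const]

open scoped Classical in
/-- The determinant of the perturbed Laplacian upstairs, computed block by block. -/
lemma pdet_blockMatrix (c : GCover G Xt X) (o : X.Orientation) (η : X.Edge → G) (r : X.V) :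
    pdet (pairs c) (blockMatrix c o η) =
      (∏ v, (Nat.card (c.dil v) : ℂ) ^ (Fintype.card G / Nat.card (c.dil v))) *
      ((Fintype.card G : ℂ) * (Fintype.card X.V : ℂ) ^ 2 * X.numSpanningTrees *
        ∏ ρ ∈ Finset.univ.erase (1 : G →* ℂ), (c.twistedWeight o η ρ : ℂ)) := by
  rw [pdet_eq_prod (pairs c) Prod.fst _ Finset.univ (fun _ _ => Finset.mem_univ _)
    fun p _ q _ h => by simp [blockMatrix, h],
    Finset.prod_congr rfl fun ρ _ => pdet_block c o η ρ, Finset.prod_mul_distrib, prod_dil,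
    ← Finset.mul_prod_erase _ _ (Finset.mem_univ (1 : G →* ℂ)), pdet_block_one c o η r]
  congr 2
  refine Finset.prod_congr rfl fun ρ hρ => ?_
  rw [twistedWeight_eq]
  refine pdet_congr fun u _ v _ => ?_
  simp [Finset.ne_of_mem_erase hρ]

lemma sum_d (c : GCover G Xt X) :
    ∑ w, (c.d w : ℂ) = (Fintype.card G : ℂ) * Fintype.card X.V := by
  have h : ∑ w, c.d w = Fintype.card G * Fintype.card X.V := by
    rw [← Finset.sum_fiberwise Finset.univ c.vMap c.d, Finset.sum_congr rfl fun v _ => c.deg_eq v]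
    simp [mul_comm]
  exact_mod_cast h

/-- Comparison of the two evaluations of the determinant of the perturbed Laplacian. -/
lemma card_mul_numSpanningTrees [DecidableEq (G →* ℂ)] (hrep : c.IsVoltageRep o σ η) (r : X.V) :
    (Fintype.card G : ℂ) * Xt.numSpanningTrees =
      (∏ v, (Nat.card (c.dil v) : ℂ) ^ (Fintype.card G / Nat.card (c.dil v))) *
      (X.numSpanningTrees *
        ∏ ρ ∈ Finset.univ.erase (1 : G →* ℂ), (c.twistedWeight o η ρ : ℂ)) := by
  let ot : Xt.Orientation := ⟨fun e => (Xt.edgeOf_surjective e).choose,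
    fun e => (Xt.edgeOf_surjective e).choose_spec⟩
  have h1 := det_laplacian hrep ot
  rw [perturbedLap, ← pdet_univ, pdet_subLap_add_rankOne ot (σ r), sum_d, pdet_blockMatrix c o η r] at h1
  have hG : (Fintype.card G : ℂ) ≠ 0 := card_ne_zero'
  have hX : (Fintype.card X.V : ℂ) ≠ 0 :=
    Nat.cast_ne_zero.2 (Fintype.card_pos_iff.2 ⟨r⟩).ne'
  have h2 : (Fintype.card G : ℂ) * (Fintype.card X.V : ℂ) ^ 2 ≠ 0 :=
    mul_ne_zero hG (pow_ne_zero _ hX)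
  refine mul_left_cancel₀ h2 ?_
  convert h1 using 1
  · ring
  · ring_nf
    congr!

end GCover

end SerreGraph

open SerreGraph in
/-- **Theorem (main).** For a harmonic Galois cover `p : X̃ → X` of finite connected graphs
with abelian Galois group `G` of order `N` (represented by a dilated `G`-voltage assignment
`η`), the number of spanning trees of `X̃` equals
`(1/N) · ∏_v |D(v)|^{N/|D(v)|} · |Jac(X)| · ∏_{ρ ≠ 1} w(M*(X̃/X, ρ))`. -/
theorem spanning_trees_of_abelian_harmonic_cover
    (G : Type) [CommGroup G] [Fintype G] (X Xt : SerreGraph)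
    (hX : X.Connected) (hXt : Xt.Connected)
    (c : GCover G Xt X) (o : X.Orientation) (σ : X.V → Xt.V) (η : X.Edge → G)
    (hrep : c.IsVoltageRep o σ η) :
    (Xt.numSpanningTrees : ℝ) =
      (1 / (Fintype.card G : ℝ)) *
      (∏ v : X.V, (Nat.card (c.dilation v) : ℝ) ^
          (Fintype.card G / Nat.card (c.dilation v))) *
      (X.numSpanningTrees : ℝ) *
      ∏ᶠ (ρ : G →* ℂ) (_ : ρ ≠ 1), c.twistedWeight o η ρ := by
  classical
  obtain ⟨r⟩ := hX.1
  have hprod : (∏ᶠ (ρ : G →* ℂ) (_ : ρ ≠ 1), c.twistedWeight o η ρ) =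
      ∏ ρ ∈ Finset.univ.erase (1 : G →* ℂ), c.twistedWeight o η ρ :=
    finprod_cond_eq_prod_of_cond_iff _ fun _ => by simp
  have hG : (Fintype.card G : ℝ) ≠ 0 := Nat.cast_ne_zero.2 Fintype.card_ne_zero
  have h : (Fintype.card G : ℝ) * Xt.numSpanningTrees =
      (∏ v, (Nat.card (c.dil v) : ℝ) ^ (Fintype.card G / Nat.card (c.dil v))) *
      (X.numSpanningTrees *
        ∏ ρ ∈ Finset.univ.erase (1 : G →* ℂ), c.twistedWeight o η ρ) := by
    exact_mod_cast GCover.card_mul_numSpanningTrees hrep r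
  rw [hprod, eq_comm, mul_assoc, mul_assoc, one_div, inv_mul_eq_iff_eq_mul₀ hG, h]
  rfl
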